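/- For every natural number n ≥ 6, the central quotient A[D_n] / Z(A[D_n]) of the Artin group A[D_n] by its center has property R_∞; that is, for every automorphism φ of A[D_n] / Z(A[D_n]), the set of φ-twisted conjugacy classes is infinite. -/

import Mathlib

/-- Two elements `g h` of a group `G` are `φ`-twisted conjugate if there is `x : G`
with `h = x * g * (φ x)⁻¹`. -/
def TwistedConj {G : Type*} [Group G] (φ : G ≃* G) (g h : G) : Prop :=
  ∃ x : G, h = x * g * (φ x)⁻¹

/-- `R(φ) = ∞`: the set of `φ`-twisted conjugacy classes is infinite. -/
def ReidemeisterInfinite {G : Type*} [Group G] (φ : G ≃* G) : Prop :=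
  Infinite (Quot (TwistedConj φ))

/-- A group `G` has property `R_∞` if `R(φ) = ∞` for every automorphism `φ` of `G`. -/
def PropertyRInfinity (G : Type*) [Group G] : Prop :=
  ∀ φ : G ≃* G, ReidemeisterInfinite φ

/-- The pairs of (0-indexed) generator indices of the Artin group of type `D_n` that are
joined by an edge of the Coxeter graph (i.e. satisfy a braid relation `sts = tst`).
In the 1-indexed notation of the paper these are the pairs `{i, i+1}` with `i+1 ≤ n-1`,
together with `{n-2, n}`. -/
def dnBraid (n : ℕ) (i j : Fin n) : Prop :=
  (j.val = i.val + 1 ∧ j.val ≤ n - 2) ∨ (i.val = j.val + 1 ∧ i.val ≤ n - 2) ∨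
  (i.val = n - 3 ∧ j.val = n - 1) ∨ (i.val = n - 1 ∧ j.val = n - 3)

/-- The defining relations of the Artin group of type `D_n`: braid relations
`t_i t_j t_i = t_j t_i t_j` for pairs joined by an edge, and commutation relations
`t_i t_j = t_j t_i` for all other pairs. -/
def dnRels (n : ℕ) : Set (FreeGroup (Fin n)) :=
  { r | ∃ i j : Fin n, i ≠ j ∧
      ((dnBraid n i j ∧
          r = FreeGroup.of i * FreeGroup.of j * FreeGroup.of i *
              (FreeGroup.of j * FreeGroup.of i * FreeGroup.of j)⁻¹) ∨
        (¬ dnBraid n i j ∧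
          r = FreeGroup.of i * FreeGroup.of j * (FreeGroup.of j * FreeGroup.of i)⁻¹)) }

/-- The Artin group of type `D_n` (generators indexed by `Fin n`, with `i : Fin n`
corresponding to the generator `t_{i+1}` of the paper). -/
abbrev ArtinD (n : ℕ) : Type := PresentedGroup (dnRels n)

/-! The two fork generators of `A[D_n]` have the same image in `S_n`, and the kernel of the
resulting map onto `S_n` is, by the Coxeter presentation of `S_n`, normally generated by the
squares of the generators and the quotient of the fork generators.  A homomorphism from this pure
subgroup to `ℚ` is therefore determined by its values on one twist (a square of a conjugate of a
generator) for each transposition.  A map to the wreath product of `ℚ` with `S_n` acting on the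
transpositions shows that every function of sum zero on the transpositions occurs; it kills the
center, so that the same holds in the central quotient.

Let `φ` be an automorphism and `k > 0` least such that `φ ^ k` preserves the pure subgroup; then
`φ ^ k` induces an automorphism of `S_n`.  Comparing traces of two permutation representations shows
that it maps transpositions to transpositions, even for `n = 6`, so that after composing with an
inner automorphism it fixes a given transposition `(z o)`.  The functions on transpositions that are
antisymmetric under `(z o)` and invariant under the transpositions fixing `z` and `o` form a line,
spanned by the degree at `z` minus the degree at `o`.  The corresponding character `μ` of the pure
subgroup is scaled by `φ ^ k`, and by a unit of `ℤ` as the pure subgroup is finitely generated.  The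
sign is removed by another inner automorphism.

Since `A_n` is perfect and `φ ^ i` does not preserve the pure subgroup for `0 < i < k`, every even
permutation has a lift `d` for which all these `φ ^ i d` are pure.  Such lifts provide the inner
automorphisms, so that `μ` is invariant under the `k`-th power of the modified `φ`.  Its sum along
orbits is then a `φ`-invariant character of a subgroup of finite index.  It is nonzero: conjugation
by a lift of an even permutation exchanging `z` and `o` changes the sign of only one summand.
A nonzero invariant character on a subgroup of finite index separates infinitely many twisted
conjugacy classes. -/

open Equiv Equiv.Perm

/-! ### Functions additive on a subgroup -/

/-- The function `μ : G → A` restricts to a homomorphism on the subgroup `K`.  The values of `μ`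
off `K` are irrelevant; keeping `μ` defined on all of `G` allows it to be evaluated on conjugates
and on images under automorphisms without carrying membership proofs. -/
def IsAdditiveOn {G A : Type*} [Group G] [AddCommGroup A] (K : Subgroup G) (μ : G → A) : Prop :=
  ∀ ⦃x⦄, x ∈ K → ∀ ⦃y⦄, y ∈ K → μ (x * y) = μ x + μ y

namespace IsAdditiveOn

variable {G H A : Type*} [Group G] [Group H] [AddCommGroup A] {K : Subgroup G} {μ : G → A}

theorem map_one (hμ : IsAdditiveOn K μ) : μ 1 = 0 := by
  simpa using hμ K.one_mem K.one_mem

theorem map_inv (hμ : IsAdditiveOn K μ) {x : G} (hx : x ∈ K) : μ x⁻¹ = -μ x := by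
  have h := hμ (K.inv_mem hx) hx
  rw [inv_mul_cancel, hμ.map_one] at h
  exact eq_neg_of_add_eq_zero_left h.symm

theorem map_pow (hμ : IsAdditiveOn K μ) {x : G} (hx : x ∈ K) (m : ℕ) : μ (x ^ m) = m • μ x := by
  induction m with
  | zero => simpa using hμ.map_one
  | succ m ih => rw [pow_succ, hμ (K.pow_mem hx m) hx, ih, succ_nsmul]

theorem map_conj (hμ : IsAdditiveOn K μ) {k x : G} (hk : k ∈ K) (hx : x ∈ K) :
    μ (k * x * k⁻¹) = μ x := by
  rw [hμ (K.mul_mem hk hx) (K.inv_mem hk), hμ hk hx, hμ.map_inv hk]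
  abel

theorem mono (hμ : IsAdditiveOn K μ) {N : Subgroup G} (hN : N ≤ K) : IsAdditiveOn N μ :=
  fun _ hx _ hy => hμ (hN hx) (hN hy)

theorem comp (hμ : IsAdditiveOn K μ) (f : H →* G) : IsAdditiveOn (K.comap f) (μ ∘ f) :=
  fun x hx y hy => by
    rw [Function.comp_apply, _root_.map_mul]
    exact hμ hx hy

theorem sum {ι : Type*} {s : Finset ι} {ν : ι → G → A} (hν : ∀ i ∈ s, IsAdditiveOn K (ν i)) :
    IsAdditiveOn K fun x => ∑ i ∈ s, ν i x := fun _ hx _ hy => by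
  rw [← Finset.sum_add_distrib]
  exact Finset.sum_congr rfl fun i hi => hν i hi hx hy

theorem sub {ν : G → A} (hμ : IsAdditiveOn K μ) (hν : IsAdditiveOn K ν) :
    IsAdditiveOn K (μ - ν) := fun _ hx _ hy => by
  rw [Pi.sub_apply, hμ hx hy, hν hx hy]
  exact add_sub_add_comm ..

theorem const_mul {R : Type*} [Ring R] {ν : G → R} (hν : IsAdditiveOn K ν) (c : R) :
    IsAdditiveOn K fun x => c * ν x :=
  fun _ hx _ hy => (congrArg (c * ·) (hν hx hy)).trans (mul_add _ _ _)

theorem eq_zero_of_mem_normalClosure [K.Normal] (hμ : IsAdditiveOn K μ) {S : Set G} (hS : S ⊆ K)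
    (h : ∀ s ∈ S, ∀ g, μ (g * s * g⁻¹) = 0) {x : G} (hx : x ∈ Subgroup.normalClosure S) :
    μ x = 0 := by
  have h_le : Subgroup.normalClosure S ≤ K := Subgroup.normalClosure_le_normal hS
  induction hx using Subgroup.closure_induction with
  | mem x hx =>
    obtain ⟨s, hs, hx⟩ := Group.mem_conjugatesOfSet_iff.mp hx
    obtain ⟨g, rfl⟩ := isConj_iff.mp hx
    exact h s hs g
  | one => exact hμ.map_one
  | mul x y hx hy ihx ihy => rw [hμ (h_le hx) (h_le hy), ihx, ihy, add_zero]
  | inv x hx ihx => rw [hμ.map_inv (h_le hx), ihx, neg_zero]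

end IsAdditiveOn

/-! ### Twisted conjugacy -/

namespace TwistedConj

variable {G : Type*} [Group G] {φ : MulAut G}

theorem equivalence (φ : MulAut G) : Equivalence (TwistedConj φ) where
  refl _ := ⟨1, by simp⟩
  symm := by
    rintro g _ ⟨x, rfl⟩
    exact ⟨x⁻¹, by simp [mul_assoc]⟩
  trans := by
    rintro g _ _ ⟨x, rfl⟩ ⟨y, rfl⟩
    exact ⟨y * x, by simp [mul_assoc]⟩

/-- Each twisted conjugacy class splits into at most `[G : N]` classes under conjugation by
elements of `N`, so the pigeonhole principle applies to these finer classes too. -/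
theorem exists_ne_mem_eq (hφ : ¬ ReidemeisterInfinite φ) (N : Subgroup G) [N.Normal]
    [N.FiniteIndex] (g : ℕ → G) : ∃ i j, i ≠ j ∧ ∃ y ∈ N, g j = y * g i * (φ y)⁻¹ := by
  have : Finite (Quot (TwistedConj φ)) := not_infinite_iff_finite.mp hφ
  have class_rep (j : ℕ) : ∃ x, g j = x * (Quot.mk (TwistedConj φ) (g j)).out * (φ x)⁻¹ :=
    (equivalence φ).eqvGen_iff.mp (Quot.eqvGen_exact (Quot.out_eq _))
  choose x hx using class_rep
  obtain ⟨i, j, hij, h⟩ := Finite.exists_ne_map_eq_of_infinite fun j =>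
    (Quot.mk (TwistedConj φ) (g j), (x j : G ⧸ N))
  obtain ⟨h_class, h_coset⟩ := Prod.mk.inj h
  refine ⟨i, j, hij, x j * (x i)⁻¹, ?_, ?_⟩
  · simpa [mul_assoc] using
      ‹N.Normal›.conj_mem _ (QuotientGroup.eq.mp h_coset) (x i)
  · rw [hx j, hx i, ← h_class]
    simp [mul_assoc]

end TwistedConj

section ReidemeisterNumber

variable {G A : Type*} [Group G] [AddCommGroup A] {φ : MulAut G}

theorem ReidemeisterInfinite.of_conj_mul (d : G)
    (h : ReidemeisterInfinite (MulAut.conj d * φ)) : ReidemeisterInfinite φ := by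
  have hd (g g' : G) : TwistedConj φ g g' →
      TwistedConj (MulAut.conj d * φ) (g * d⁻¹) (g' * d⁻¹) := by
    rintro ⟨x, rfl⟩
    exact ⟨x, by simp [mul_assoc]⟩
  have : Infinite (Quot (TwistedConj (MulAut.conj d * φ))) := h
  refine Infinite.of_surjective (Quot.map (· * d⁻¹) hd) ?_
  rintro ⟨g⟩
  exact ⟨Quot.mk _ (g * d), congrArg _ (mul_inv_cancel_right g d)⟩

theorem reidemeisterInfinite_of_isAdditiveOn [IsAddTorsionFree A] {N : Subgroup G} [N.Normal]
    [N.FiniteIndex] (hN : ∀ x ∈ N, φ x ∈ N) {μ : G → A} (hμ : IsAdditiveOn N μ)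
    (hφ : ∀ x ∈ N, μ (φ x) = μ x) {x : G} (hx : x ∈ N) (hx₀ : μ x ≠ 0) :
    ReidemeisterInfinite φ := by
  by_contra h
  obtain ⟨i, j, hij, y, hy, hxy⟩ := TwistedConj.exists_ne_mem_eq h N (x ^ ·)
  have h_eq : μ (x ^ j) = μ (x ^ i) := by
    rw [hxy, hμ (N.mul_mem hy (N.pow_mem hx i)) (N.inv_mem (hN y hy)), hμ hy (N.pow_mem hx i),
      hμ.map_inv (hN y hy), hφ y hy]
    abel
  rw [hμ.map_pow hx, hμ.map_pow hx] at h_eq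
  exact hij ((IsAddLeftRegular.all (μ x)).nsmul_injective hx₀ h_eq.symm)

/-- The subgroup of the elements whose images under `φ ^ 0, …, φ ^ (k - 1)` all lie in `K`. -/
def iterateComap (φ : MulAut G) (K : Subgroup G) (k : ℕ) : Subgroup G :=
  ⨅ i : Fin k, K.comap (φ ^ (i : ℕ)).toMonoidHom

theorem mem_iterateComap {K : Subgroup G} {k : ℕ} {x : G} :
    x ∈ iterateComap φ K k ↔ ∀ i < k, (φ ^ i) x ∈ K := by
  simp [iterateComap, Subgroup.mem_iInf, Fin.forall_iff]

instance (K : Subgroup G) [K.Normal] (k : ℕ) : (iterateComap φ K k).Normal :=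
  Subgroup.normal_iInf_normal fun _ => inferInstance

instance (K : Subgroup G) [K.FiniteIndex] (k : ℕ) : (iterateComap φ K k).FiniteIndex :=
  Subgroup.finiteIndex_iInf fun i => ⟨by
    rw [Subgroup.index_comap_of_surjective K (φ ^ (i : ℕ)).surjective]
    exact Subgroup.FiniteIndex.index_ne_zero⟩

theorem iterateComap_le {K : Subgroup G} {k : ℕ} (hk : 0 < k) : iterateComap φ K k ≤ K :=
  fun _ hx => mem_iterateComap.mp hx 0 hk

theorem apply_mem_iterateComap {K : Subgroup G} {k : ℕ} (hK : ∀ x ∈ K, (φ ^ k) x ∈ K) {x : G}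
    (hx : x ∈ iterateComap φ K k) : φ x ∈ iterateComap φ K k := mem_iterateComap.mpr fun i hi => by
  rw [← MulAut.mul_apply, ← pow_succ]
  obtain hi | rfl : i + 1 < k ∨ i + 1 = k := by omega
  exacts [mem_iterateComap.mp hx _ hi, hK x (iterateComap_le i.succ_pos hx)]

theorem birkhoffSum_mulAut (φ : MulAut G) (μ : G → A) (k : ℕ) (x : G) :
    birkhoffSum φ μ k x = ∑ i ∈ Finset.range k, μ ((φ ^ i) x) :=
  Finset.sum_congr rfl fun i _ => by rw [hom_coe_pow (⇑) rfl (fun _ _ => rfl) φ i]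

theorem isAdditiveOn_birkhoffSum {K : Subgroup G} {μ : G → A} (hμ : IsAdditiveOn K μ) (k : ℕ) :
    IsAdditiveOn (iterateComap φ K k) (birkhoffSum φ μ k) := by
  rw [funext (birkhoffSum_mulAut φ μ k)]
  exact IsAdditiveOn.sum fun i hi => (hμ.comp (φ ^ i).toMonoidHom).mono fun y hy =>
    mem_iterateComap.mp hy i (Finset.mem_range.mp hi)

theorem birkhoffSum_apply_eq {μ : G → A} {k : ℕ} {x : G} (hx : μ ((φ ^ k) x) = μ x) :
    birkhoffSum φ μ k (φ x) = birkhoffSum φ μ k x := by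
  rw [← sub_eq_zero, birkhoffSum_apply_sub_birkhoffSum,
    ← hom_coe_pow (⇑) rfl (fun _ _ => rfl) φ k, hx, sub_self]

/-- Conjugation by `e` changes only the summand `i = 0`, and reverses its sign. -/
theorem birkhoffSum_conj {K : Subgroup G} {μ : G → A} (hμ : IsAdditiveOn K μ) {k : ℕ} (hk : 0 < k)
    {e : G} (he : ∀ i, 0 < i → i < k → (φ ^ i) e ∈ K) (hμe : ∀ x ∈ K, μ (e * x * e⁻¹) = -μ x)
    {x : G} (hx : x ∈ iterateComap φ K k) :
    birkhoffSum φ μ k (e * x * e⁻¹) = birkhoffSum φ μ k x - 2 • μ x := by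
  obtain ⟨k, rfl⟩ : ∃ l, k = l + 1 := ⟨k - 1, by omega⟩
  have h_tail : ∀ i ∈ Finset.range k, μ ((φ ^ (i + 1)) (e * x * e⁻¹)) = μ ((φ ^ (i + 1)) x) := by
    intro i hi
    have hi : i + 1 < k + 1 := by simpa using hi
    rw [map_mul, map_mul, map_inv]
    exact hμ.map_conj (he _ i.succ_pos hi) (mem_iterateComap.mp hx _ hi)
  simp only [birkhoffSum_mulAut, Finset.sum_range_succ', pow_zero, MulAut.one_apply]
  rw [Finset.sum_congr rfl h_tail, hμe x (iterateComap_le hk hx), two_nsmul]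
  abel

theorem reidemeisterInfinite_of_pow_invariant [IsAddTorsionFree A] {K : Subgroup G} [K.Normal]
    [K.FiniteIndex] {k : ℕ} (hk : 0 < k) (hK : ∀ x ∈ K, (φ ^ k) x ∈ K) {μ : G → A}
    (hμ : IsAdditiveOn K μ) (hμφ : ∀ x ∈ K, μ ((φ ^ k) x) = μ x) {e : G}
    (he : ∀ i, 0 < i → i < k → (φ ^ i) e ∈ K)
    (hμe : ∀ x ∈ K, μ (e * x * e⁻¹) = -μ x) {x : G} (hx : x ∈ K) (hx₀ : μ x ≠ 0) :
    ReidemeisterInfinite φ := by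
  obtain ⟨m, hm, -, hxm⟩ := Subgroup.exists_pow_mem_of_index_ne_zero
    (Subgroup.FiniteIndex.index_ne_zero (H := iterateComap φ K k)) x
  have hxm₀ : μ (x ^ m) ≠ 0 := by
    rw [hμ.map_pow hx]
    exact fun h => hx₀ ((nsmul_eq_zero_iff_right hm.ne').mp h)
  suffices h : ∃ y ∈ iterateComap φ K k, birkhoffSum φ μ k y ≠ 0 by
    obtain ⟨y, hy, hy₀⟩ := h
    exact reidemeisterInfinite_of_isAdditiveOn (fun _ => apply_mem_iterateComap hK)
      (isAdditiveOn_birkhoffSum hμ k)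
      (fun z hz => birkhoffSum_apply_eq (hμφ z (iterateComap_le hk hz))) hy hy₀
  by_cases h : birkhoffSum φ μ k (x ^ m) = 0
  · refine ⟨e * x ^ m * e⁻¹, Subgroup.Normal.conj_mem inferInstance _ hxm e, ?_⟩
    rw [birkhoffSum_conj hμ hk he hμe hxm, h, zero_sub]
    exact neg_ne_zero.mpr fun h => hxm₀ (two_nsmul_eq_zero.mp h)
  · exact ⟨x ^ m, hxm, h⟩

theorem exists_conj_mul_pow_eq {Q : Type*} [Group Q] (φ : MulAut G) (π : G →* Q) {d : G} {k : ℕ}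
    (hd : ∀ i, 0 < i → i < k → π ((φ ^ i) d) = 1) {j : ℕ} (hj : 0 < j) (hjk : j ≤ k) :
    ∃ c, π c = π d ∧ (MulAut.conj d * φ) ^ j = MulAut.conj c * φ ^ j := by
  induction j, hj using Nat.le_induction with
  | base => exact ⟨d, rfl, by simp⟩
  | succ j hj ih =>
    obtain ⟨c, hc, h⟩ := ih (by omega)
    refine ⟨c * (φ ^ j) d, by rw [map_mul, hc, hd j hj hjk, mul_one], ?_⟩
    rw [pow_succ, h]
    ext x
    simp [pow_succ, mul_assoc]

end ReidemeisterNumber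

/-! ### Homomorphisms to finite groups under automorphisms -/

section FiniteQuotients

variable {G Q : Type*} [Group G] [Group Q]

theorem finite_monoidHom_of_fg [Group.FG G] [Finite Q] : Finite (G →* Q) := by
  obtain ⟨S, hS, hS_fin⟩ := Group.fg_iff.mp ‹Group.FG G›
  have := hS_fin.to_subtype
  refine Finite.of_injective (fun (f : G →* Q) (s : S) => f s) fun f f' h => ?_
  exact MonoidHom.eq_of_eqOn_dense hS fun s hs => congrFun h ⟨s, hs⟩

theorem exists_apply_pow_eq_of_finite [Group.FG G] [Finite Q] (φ : MulAut G) (π : G →* Q) :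
    ∃ m, 0 < m ∧ ∀ x, π ((φ ^ m) x) = π x := by
  have := finite_monoidHom_of_fg (G := G) (Q := Q)
  obtain ⟨i, j, hij, h⟩ := Set.finite_univ.exists_lt_map_eq_of_forall_mem
    (f := fun i : ℕ => π.comp (φ ^ i).toMonoidHom) fun _ => Set.mem_univ _
  refine ⟨j - i, by omega, fun x => ?_⟩
  have h := DFunLike.congr_fun h ((φ ^ i)⁻¹ x)
  rw [pow_sub φ hij.le, MulAut.mul_apply]
  simpa using h.symm

theorem comap_eq_self_of_le {K : Subgroup G} [K.FiniteIndex] {f : G →* G}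
    (hf : Function.Surjective f) (h : K.comap f ≤ K) : K.comap f = K := by
  have h_index := Subgroup.index_comap_of_surjective K hf
  have : (K.comap f).FiniteIndex := ⟨h_index ▸ Subgroup.FiniteIndex.index_ne_zero⟩
  by_contra hne
  exact (Subgroup.index_strictAnti (lt_of_le_of_ne h hne)).ne' h_index

theorem le_map_inf_of_commutator_eq_self {A : Subgroup Q} (hA : ⁅A, A⁆ = A) {π : G →* Q}
    {N₁ N₂ : Subgroup G} [N₁.Normal] [N₂.Normal] (h₁ : A ≤ N₁.map π) (h₂ : A ≤ N₂.map π) :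
    A ≤ (N₁ ⊓ N₂).map π :=
  calc A = ⁅A, A⁆ := hA.symm
    _ ≤ ⁅N₁.map π, N₂.map π⁆ := Subgroup.commutator_mono h₁ h₂
    _ = ⁅N₁, N₂⁆.map π := (Subgroup.map_commutator N₁ N₂ π).symm
    _ ≤ (N₁ ⊓ N₂).map π := Subgroup.map_mono (Subgroup.commutator_le_inf N₁ N₂)

theorem le_map_iInf_of_commutator_eq_self {A : Subgroup Q} (hA : ⁅A, A⁆ = A) {π : G →* Q}
    (hπ : Function.Surjective π) {ι : Type*} (s : Finset ι) {N : ι → Subgroup G}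
    [∀ i, (N i).Normal] (h : ∀ i ∈ s, A ≤ (N i).map π) : A ≤ (⨅ i ∈ s, N i).map π := by
  classical
  induction s using Finset.induction with
  | empty => simp [← MonoidHom.range_eq_map, MonoidHom.range_eq_top.mpr hπ]
  | insert i s _ ih =>
    have : (⨅ i ∈ s, N i).Normal :=
      Subgroup.normal_iInf_normal fun i => Subgroup.normal_iInf_normal fun _ => inferInstance
    rw [Finset.iInf_insert]
    exact le_map_inf_of_commutator_eq_self hA (h i (Finset.mem_insert_self i s))
      (ih fun j hj => h j (Finset.mem_insert_of_mem hj))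

theorem exists_mulAut_apply_eq [Finite Q] {π : G →* Q} (hπ : Function.Surjective π) {ψ : MulAut G}
    (hψ : ∀ x, π x = 1 → π (ψ x) = 1) : ∃ ψ' : MulAut Q, ∀ x, π (ψ x) = ψ' (π x) := by
  let f : Q →* Q := π.liftOfSurjective hπ ⟨π.comp ψ.toMonoidHom, hψ⟩
  have hf (x : G) : f (π x) = π (ψ x) := π.liftOfRightInverse_comp_apply _ _ _ x
  have hf_surj : Function.Surjective f :=
    Function.Surjective.of_comp (g := π) <| by
      rw [show f ∘ π = π ∘ ψ from funext hf]
      exact hπ.comp ψ.surjective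
  exact ⟨MulEquiv.ofBijective f (Finite.surjective_iff_bijective.mp hf_surj), fun x => (hf x).symm⟩

end FiniteQuotients

theorem alternatingGroup_le_map_comap_ker {G α : Type*} [Group G] [Fintype α] [DecidableEq α]
    (hα : 5 ≤ Nat.card α) {π : G →* Perm α} (hπ : Function.Surjective π) {φ : MulAut G}
    (hφ : ¬ ∀ x, π x = 1 → π (φ x) = 1) :
    alternatingGroup α ≤ (π.ker.comap φ.toMonoidHom).map π := by
  have := Subgroup.Normal.map (H := π.ker.comap φ.toMonoidHom) inferInstance π hπ
  refine alternatingGroup_le_of_normal hα ((Subgroup.nontrivial_iff_ne_bot _).mpr fun h => hφ ?_)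
  have h_le : π.ker.comap φ.toMonoidHom ≤ π.ker := (Subgroup.map_eq_bot_iff _).mp h
  exact (comap_eq_self_of_le φ.surjective h_le).ge

theorem exists_pow_forall_alternatingGroup_lift {G α : Type*} [Group G] [Group.FG G] [Fintype α]
    [DecidableEq α] (hα : 5 ≤ Nat.card α) {π : G →* Perm α} (hπ : Function.Surjective π)
    (φ : MulAut G) :
    ∃ k, 0 < k ∧ (∀ x, π x = 1 → π ((φ ^ k) x) = 1) ∧ ∀ a ∈ alternatingGroup α,
      ∃ d, π d = a ∧ ∀ i, 0 < i → i < k → π ((φ ^ i) d) = 1 := by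
  classical
  have h_ex : ∃ k, 0 < k ∧ ∀ x, π x = 1 → π ((φ ^ k) x) = 1 := by
    obtain ⟨m, hm, h⟩ := exists_apply_pow_eq_of_finite φ π
    exact ⟨m, hm, fun x hx => (h x).trans hx⟩
  obtain ⟨hk, hφk⟩ := Nat.find_spec h_ex
  refine ⟨Nat.find h_ex, hk, hφk, fun a ha => ?_⟩
  have h_le : alternatingGroup α ≤ (⨅ i ∈ Finset.Ioo 0 (Nat.find h_ex),
      π.ker.comap (φ ^ i).toMonoidHom).map π := by
    refine le_map_iInf_of_commutator_eq_self (commutator_alternatingGroup_eq_self hα) hπ _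
      fun i hi => alternatingGroup_le_map_comap_ker hα hπ fun h => ?_
    obtain ⟨hi, hik⟩ := Finset.mem_Ioo.mp hi
    exact Nat.find_min h_ex hik ⟨hi, h⟩
  obtain ⟨d, hd, rfl⟩ := h_le ha
  refine ⟨d, rfl, fun i hi hik => ?_⟩
  exact (Subgroup.mem_iInf.mp (Subgroup.mem_iInf.mp hd i) (Finset.mem_Ioo.mpr ⟨hi, hik⟩) :)

/-! ### Coxeter groups of type A -/

/-- The elements `s 0, …, s (m - 1)` satisfy the relations of the Coxeter group of type `A_m`. -/
structure IsCoxeterSequence {Γ : Type*} [Group Γ] (s : ℕ → Γ) (m : ℕ) : Prop where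
  mul_self : ∀ i < m, s i * s i = 1
  braid : ∀ i, i + 1 < m → s i * s (i + 1) * s i = s (i + 1) * s i * s (i + 1)
  comm : ∀ i j, i + 1 < j → j < m → s i * s j = s j * s i

/-- The product `s (i + l - 1) ⋯ s (i + 1) s i` of `l` consecutive terms, in descending order.
When `i + l = m` these are the coset representatives of the type `A_{m-1}` subgroup in type
`A_m`. -/
def descendingProd {Γ : Type*} [Group Γ] (s : ℕ → Γ) : ℕ → ℕ → Γ
  | _, 0 => 1
  | i, l + 1 => descendingProd s (i + 1) l * s i

namespace IsCoxeterSequence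

variable {Γ : Type*} [Group Γ] {s : ℕ → Γ} {m : ℕ}

theorem mono (hs : IsCoxeterSequence s m) {m' : ℕ} (h : m' ≤ m) : IsCoxeterSequence s m' where
  mul_self i hi := hs.mul_self i (by omega)
  braid i hi := hs.braid i (by omega)
  comm i j hij hj := hs.comm i j hij (by omega)

theorem descendingProd_mul_comm (hs : IsCoxeterSequence s m) {i j l : ℕ} (hji : j + 1 < i)
    (hm : i + l ≤ m) : descendingProd s i l * s j = s j * descendingProd s i l := by
  induction l generalizing i with
  | zero => simp [descendingProd]
  | succ l ih =>
    rw [descendingProd, mul_assoc, ← hs.comm j i hji (by omega), ← mul_assoc,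
      ih (by omega) (by omega), mul_assoc]

theorem descendingProd_mul_shift (hs : IsCoxeterSequence s m) {i j l : ℕ} (hij : i ≤ j)
    (hjl : j + 1 < i + l) (hm : i + l ≤ m) :
    descendingProd s i l * s (j + 1) = s j * descendingProd s i l := by
  induction l generalizing i with
  | zero => omega
  | succ l ih =>
    obtain rfl | hij := hij.eq_or_lt
    · obtain ⟨l, rfl⟩ : ∃ k, l = k + 1 := ⟨l - 1, by omega⟩
      calc descendingProd s (i + 2) l * s (i + 1) * s i * s (i + 1)
          = descendingProd s (i + 2) l * (s (i + 1) * s i * s (i + 1)) := by simp only [mul_assoc]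
        _ = descendingProd s (i + 2) l * s i * (s (i + 1) * s i) := by
          rw [← hs.braid i (by omega)]
          simp only [mul_assoc]
        _ = s i * (descendingProd s (i + 2) l * s (i + 1) * s i) := by
          rw [hs.descendingProd_mul_comm (by omega) (by omega)]
          simp only [mul_assoc]
    · rw [descendingProd, mul_assoc, hs.comm i (j + 1) (by omega) (by omega), ← mul_assoc,
        ih hij (by omega) (by omega), mul_assoc]

theorem exists_mul_descendingProd_mul (hs : IsCoxeterSequence s (m + 1)) {h : Γ}
    (hh : h ∈ Subgroup.closure (s '' Set.Iio m)) {i l j : ℕ} (hil : i + l = m + 1)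
    (hj : j < m + 1) : ∃ h' ∈ Subgroup.closure (s '' Set.Iio m), ∃ i' l', i' + l' = m + 1 ∧
      h * descendingProd s i l * s j = h' * descendingProd s i' l' := by
  have mem {j : ℕ} (hj : j < m) : s j ∈ Subgroup.closure (s '' Set.Iio m) :=
    Subgroup.subset_closure ⟨j, hj, rfl⟩
  obtain hji | rfl | rfl | hij : j + 1 < i ∨ j + 1 = i ∨ j = i ∨ i < j := by omega
  · refine ⟨h * s j, mul_mem hh (mem (by omega)), i, l, hil, ?_⟩
    rw [mul_assoc, hs.descendingProd_mul_comm hji hil.le, mul_assoc]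
  · exact ⟨h, hh, j, l + 1, by omega, mul_assoc ..⟩
  · obtain ⟨l, rfl⟩ : ∃ k, l = k + 1 := ⟨l - 1, by omega⟩
    refine ⟨h, hh, j + 1, l, by omega, ?_⟩
    rw [descendingProd, mul_assoc, mul_assoc, hs.mul_self j hj, mul_one]
  · obtain ⟨j, rfl⟩ : ∃ k, j = k + 1 := ⟨j - 1, by omega⟩
    refine ⟨h * s j, mul_mem hh (mem (by omega)), i, l, hil, ?_⟩
    rw [mul_assoc, hs.descendingProd_mul_shift (by omega) (by omega) hil.le, mul_assoc]

theorem exists_eq_mul_descendingProd (hs : IsCoxeterSequence s (m + 1)) {g : Γ}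
    (hg : g ∈ Subgroup.closure (s '' Set.Iio (m + 1))) :
    ∃ h ∈ Subgroup.closure (s '' Set.Iio m), ∃ i l, i + l = m + 1 ∧
      g = h * descendingProd s i l := by
  induction hg using Subgroup.closure_induction_right with
  | one => exact ⟨1, one_mem _, m + 1, 0, rfl, (mul_one 1).symm⟩
  | mul_right g y _ hy ih =>
    obtain ⟨j, hj, rfl⟩ := hy
    obtain ⟨h, hh, i, l, hil, rfl⟩ := ih
    exact hs.exists_mul_descendingProd_mul hh hil hj
  | mul_inv_cancel g y _ hy ih =>
    obtain ⟨j, hj, rfl⟩ := hy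
    obtain ⟨h, hh, i, l, hil, rfl⟩ := ih
    rw [inv_eq_of_mul_eq_one_left (hs.mul_self j hj)]
    exact hs.exists_mul_descendingProd_mul hh hil hj

variable {α : Type*} [DecidableEq α] {p : Γ →* Perm α} {e : ℕ → α}

theorem map_descendingProd_apply (hp : ∀ i < m, p (s i) = swap (e i) (e (i + 1))) {i l : ℕ}
    (hm : i + l ≤ m) : p (descendingProd s i l) (e i) = e (i + l) := by
  induction l generalizing i with
  | zero => simp [descendingProd]
  | succ l ih =>
    rw [descendingProd, map_mul, mul_apply, hp i (by omega), swap_apply_left, ih (by omega)]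
    congr 1
    omega

theorem map_apply_of_mem_closure (he : Set.InjOn e (Set.Iic (m + 1)))
    (hp : ∀ i < m + 1, p (s i) = swap (e i) (e (i + 1))) {h : Γ}
    (hh : h ∈ Subgroup.closure (s '' Set.Iio m)) : p h (e (m + 1)) = e (m + 1) := by
  suffices Subgroup.closure (s '' Set.Iio m) ≤
      (MulAction.stabilizer (Perm α) (e (m + 1))).comap p from this hh
  rw [Subgroup.closure_le]
  rintro _ ⟨i, hi : i < m, rfl⟩
  change p (s i) (e (m + 1)) = e (m + 1)
  rw [hp i (by omega)]
  refine swap_apply_of_ne_of_ne (fun h => ?_) fun h => ?_ <;>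
    have := he (Set.mem_Iic.mpr (by omega)) (Set.mem_Iic.mpr (by omega)) h <;> omega

theorem eq_one_of_map_eq_one (hs : IsCoxeterSequence s m) (he : Set.InjOn e (Set.Iic m))
    (hp : ∀ i < m, p (s i) = swap (e i) (e (i + 1))) {g : Γ}
    (hg : g ∈ Subgroup.closure (s '' Set.Iio m)) (hpg : p g = 1) : g = 1 := by
  induction m generalizing g with
  | zero => simpa using hg
  | succ m ih =>
    obtain ⟨h, hh, i, l, hil, rfl⟩ := hs.exists_eq_mul_descendingProd hg
    have hi : e (m + 1) = e i :=
      calc e (m + 1) = p h (e (m + 1)) := (map_apply_of_mem_closure he hp hh).symm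
        _ = p (h * descendingProd s i l) (e i) := by
          rw [map_mul, mul_apply, map_descendingProd_apply hp hil.le, hil]
        _ = e i := by rw [hpg, one_apply]
    obtain rfl : m + 1 = i := he (Set.mem_Iic.mpr le_rfl) (Set.mem_Iic.mpr (by omega)) hi
    obtain rfl : l = 0 := by omega
    rw [descendingProd, mul_one] at hpg ⊢
    exact ih (hs.mono m.le_succ) (he.mono (Set.Iic_subset_Iic.mpr m.le_succ))
      (fun i hi => hp i (by omega)) hh hpg

end IsCoxeterSequence

/-! ### Transpositions -/

/-- The transpositions of `α`, on which `Perm α` acts by conjugation. -/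
abbrev Transposition (α : Type*) [DecidableEq α] : Type _ := {p : Perm α // p.IsSwap}

namespace Transposition

variable {α : Type*} [DecidableEq α] {x y : α}

/-- The transposition exchanging two distinct points. -/
def ofNe (h : x ≠ y) : Transposition α := ⟨swap x y, x, y, h, rfl⟩

theorem ofNe_apply_left (h : x ≠ y) : (ofNe h).1 x = y := swap_apply_left x y

theorem coe_eq_swap (p : Transposition α) (h : p.1 x ≠ x) : p.1 = swap x (p.1 x) := by
  obtain ⟨_, a, b, hab, rfl⟩ := p
  obtain rfl | rfl : x = a ∨ x = b := by
    by_contra! hx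
    exact h (swap_apply_of_ne_of_ne hx.1 hx.2)
  · simp
  · simp [swap_comm]

theorem eq_ofNe (p : Transposition α) (h : p.1 x ≠ x) : p = ofNe h.symm :=
  Subtype.ext (p.coe_eq_swap h)

theorem mul_self (p : Transposition α) : p.1 * p.1 = 1 := by
  obtain ⟨_, a, b, hab, rfl⟩ := p
  exact swap_mul_self a b

instance : MulAction (Perm α) (Transposition α) where
  smul σ p := ⟨σ * p.1 * σ⁻¹, by
    obtain ⟨_, a, b, hab, rfl⟩ := p
    exact ⟨σ a, σ b, σ.injective.ne hab, (swap_apply_apply σ a b).symm⟩⟩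
  one_smul p := Subtype.ext (by simp [HSMul.hSMul])
  mul_smul σ τ p := Subtype.ext (by simp [HSMul.hSMul, mul_assoc])

theorem coe_smul (σ : Perm α) (p : Transposition α) : (σ • p).1 = σ * p.1 * σ⁻¹ := rfl

theorem smul_ofNe (σ : Perm α) (h : x ≠ y) : σ • ofNe h = ofNe (σ.injective.ne h) :=
  Subtype.ext (swap_apply_apply σ x y).symm

theorem smul_ofNe_eq_self_iff {σ : Perm α} (h : x ≠ y) :
    σ • ofNe h = ofNe h ↔ σ x = x ∧ σ y = y ∨ σ x = y ∧ σ y = x := by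
  rw [smul_ofNe, Subtype.ext_iff]
  change swap (σ x) (σ y) = swap x y ↔ _
  constructor
  · intro hσ
    have hy : swap x y (σ x) = σ y := by rw [← hσ, swap_apply_left]
    obtain hx | hx | hx : σ x = x ∨ σ x = y ∨ σ x ≠ x ∧ σ x ≠ y := by tauto
    · exact Or.inl ⟨hx, by rw [← hy, hx, swap_apply_left]⟩
    · exact Or.inr ⟨hx, by rw [← hy, hx, swap_apply_right]⟩
    · rw [swap_apply_of_ne_of_ne hx.1 hx.2] at hy
      exact absurd (σ.injective hy) h
  · rintro (⟨hx, hy⟩ | ⟨hx, hy⟩)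
    · rw [hx, hy]
    · rw [hx, hy, swap_comm]

theorem smul_ofNe_eq_self_iff_of_mul_self {γ : Perm α} (hγ : γ * γ = 1) (h : x ≠ y) :
    γ • ofNe h = ofNe h ↔ γ x = x ∧ γ y = y ∨ γ x = y := by
  refine (smul_ofNe_eq_self_iff h).trans (or_congr_right (and_iff_left_of_imp ?_))
  rintro rfl
  rw [← mul_apply, hγ, one_apply]

theorem coe_smul_apply_eq_iff {σ : Perm α} {p : Transposition α} :
    (σ • p).1 x = x ↔ p.1 (σ⁻¹ x) = σ⁻¹ x := by
  rw [coe_smul, mul_apply, mul_apply]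
  exact Perm.eq_inv_iff_eq.symm

instance : MulAction.IsPretransitive (Perm α) (Transposition α) where
  exists_smul_eq := by
    rintro ⟨_, a, b, hab, rfl⟩ ⟨_, c, d, hcd, rfl⟩
    obtain ⟨σ, hσ⟩ := isConj_iff.mp (isConj_swap hab hcd)
    exact ⟨σ, Subtype.ext hσ⟩

variable [Fintype α]

noncomputable instance : Fintype (Transposition α) := Fintype.ofFinite _

/-- The ordered pairs of distinct points of `α` that consist either of two fixed points of `γ` or
of a moved point and its image.  For an involution `γ`, these are the endpoints of the
transpositions that commute with `γ`. -/
def commutingPairs (γ : Perm α) : Finset (α × α) :=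
  γ.supportᶜ.offDiag ∪ γ.support.image fun x => (x, γ x)

theorem mem_commutingPairs {γ : Perm α} (hγ : γ * γ = 1) :
    (x, y) ∈ commutingPairs γ ↔ ∃ h : x ≠ y, γ • ofNe h = ofNe h := by
  simp only [commutingPairs, Finset.mem_union, Finset.mem_offDiag, Finset.mem_compl, mem_support,
    not_not, Finset.mem_image, Prod.mk.injEq, smul_ofNe_eq_self_iff_of_mul_self hγ]
  grind

theorem card_commutingPairs (γ : Perm α) :
    (commutingPairs γ).card = γ.supportᶜ.offDiag.card + γ.support.card := by
  rw [commutingPairs, Finset.card_union_of_disjoint,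
    Finset.card_image_of_injective _ fun x y h => congrArg Prod.fst h]
  rw [Finset.disjoint_left]
  rintro _ h₁ h₂
  obtain ⟨x, hx, rfl⟩ := Finset.mem_image.mp h₂
  exact Finset.mem_compl.mp (Finset.mem_offDiag.mp h₁).1 hx

theorem two_mul_card_fixed {γ : Perm α} (hγ : γ * γ = 1) :
    2 * (Finset.univ.filter fun p : Transposition α => γ • p = p).card =
      (commutingPairs γ).card := by
  have h_sigma : ((Finset.univ.filter fun p : Transposition α => γ • p = p).sigma
      fun p => p.1.support).card =
        2 * (Finset.univ.filter fun p : Transposition α => γ • p = p).card := by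
    rw [Finset.card_sigma, Finset.sum_congr rfl fun p _ => card_support_eq_two.mpr p.2,
      Finset.sum_const, smul_eq_mul, mul_comm]
  rw [← h_sigma]
  refine Finset.card_nbij (fun s => (s.2, s.1.1 s.2)) ?_ ?_ ?_
  · rintro ⟨p, x⟩ hpx
    obtain ⟨hp, hx⟩ : γ • p = p ∧ p.1 x ≠ x := by simpa using hpx
    rw [p.eq_ofNe hx] at hp
    exact (mem_commutingPairs hγ).mpr ⟨hx.symm, hp⟩
  · rintro ⟨p, x⟩ hpx ⟨q, y⟩ hqy h
    have hp : p.1 x ≠ x := (by simpa using hpx : _ ∧ _).2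
    have hq : q.1 y ≠ y := (by simpa using hqy : _ ∧ _).2
    obtain ⟨rfl, h⟩ := Prod.mk.inj h
    obtain rfl : p = q := Subtype.ext (by rw [p.coe_eq_swap hp, q.coe_eq_swap hq, h])
    rfl
  · rintro ⟨x, y⟩ h
    obtain ⟨hxy, h⟩ := (mem_commutingPairs hγ).mp h
    exact ⟨⟨ofNe hxy, x⟩, by simp [h, ofNe_apply_left, hxy.symm], by simp [ofNe_apply_left]⟩

theorem isSwap_of_card_fixed_eq (hα : 5 ≤ Fintype.card α) {γ : Perm α} (hγ : γ * γ = 1)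
    (p : Transposition α)
    (h : (Finset.univ.filter fun q : Transposition α => γ • q = q).card =
      (Finset.univ.filter fun q : Transposition α => p.1 • q = q).card) : γ.IsSwap := by
  have hγ_count := two_mul_card_fixed hγ
  rw [h, two_mul_card_fixed p.mul_self, card_commutingPairs, card_commutingPairs,
    Finset.offDiag_card, Finset.offDiag_card,
    Finset.card_compl, Finset.card_compl, card_support_eq_two.mpr p.2] at hγ_count
  rw [← card_support_eq_two]
  have h_le : γ.support.card ≤ Fintype.card α := Finset.card_le_univ _
  generalize γ.support.card = c, Fintype.card α = n at *
  obtain ⟨m, rfl⟩ := Nat.exists_eq_add_of_le h_le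
  obtain ⟨l, hl⟩ : ∃ l, c + m = l + 2 := ⟨c + m - 2, by omega⟩
  rw [Nat.add_sub_cancel_left, hl, Nat.add_sub_cancel] at hγ_count
  zify [Nat.le_mul_self] at hγ_count hl hα ⊢
  have hl : (l : ℤ) = c + m - 2 := by linarith
  rw [hl] at hγ_count
  have h_prod : ((c : ℤ) - 2) * (c + 2 * m - 4) = 0 := by linear_combination hγ_count
  rcases mul_eq_zero.mp h_prod with h | h
  · linarith
  · have : (0 : ℤ) ≤ m := Int.natCast_nonneg m
    linarith

end Transposition

/-! ### Permutation representations -/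

theorem card_filter_fixed_eq_of_intertwines {K ι : Type*} [Field K] [CharZero K] [Fintype ι]
    [DecidableEq ι] {T : (ι → K) →ₗ[K] ι → K} (hT : Function.Injective T) {e e' : Perm ι}
    (h : ∀ f, T (f ∘ e') = T f ∘ e) :
    (Finset.univ.filter fun i => e' i = i).card = (Finset.univ.filter fun i => e i = i).card := by
  have trace_permMatrix (e : Perm ι) : LinearMap.trace K (ι → K) (e.permMatrix K).toLin' =
      (Finset.univ.filter fun i => e i = i).card := by
    rw [Matrix.trace_toLin'_eq, Matrix.trace_permutation, Function.fixedPoints,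
      ← Set.ncard_coe_finset]
    simp [Function.IsFixedPt]
  let E := LinearEquiv.ofInjectiveEndo T hT
  have h_conj : E.conj (e'.permMatrix K).toLin' = (e.permMatrix K).toLin' := by
    refine LinearMap.ext fun f => ?_
    obtain ⟨f, rfl⟩ := E.surjective f
    rw [LinearEquiv.conj_apply_apply, LinearEquiv.symm_apply_apply, Matrix.toLin'_apply,
      Matrix.toLin'_apply, Matrix.permMatrix_mulVec, Matrix.permMatrix_mulVec]
    exact h f
  have h_trace := LinearMap.trace_conj' (e'.permMatrix K).toLin' E
  rw [h_conj, trace_permMatrix, trace_permMatrix] at h_trace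
  exact_mod_cast h_trace.symm

theorem expect_comp_smul {Γ ι : Type*} [Group Γ] [MulAction Γ ι] [Fintype ι] (g : Γ) (f : ι → ℚ) :
    Finset.univ.expect (fun i => f (g • i)) = Finset.univ.expect f :=
  Fintype.expect_equiv (MulAction.toPerm g) _ _ fun _ => rfl

/-- The orthogonal projection of the `i`-th basis vector onto the functions of sum zero. -/
def centeredSingle {ι : Type*} [Fintype ι] [DecidableEq ι] (i : ι) : ι → ℚ :=
  Pi.single i 1 - fun _ => (Fintype.card ι : ℚ)⁻¹

section CenteredSingle

variable {ι : Type*} [Fintype ι] [DecidableEq ι]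

theorem dotProduct_centeredSingle (f : ι → ℚ) (i : ι) :
    f ⬝ᵥ centeredSingle i = f i - Finset.univ.expect f := by
  rw [centeredSingle, dotProduct_sub, dotProduct_single, mul_one, Fintype.expect_eq_sum_div_card,
    div_eq_mul_inv, Finset.sum_mul]
  rfl

theorem centeredSingle_smul_apply_smul {Γ : Type*} [Group Γ] [MulAction Γ ι] (g : Γ) (i j : ι) :
    centeredSingle (g • i) (g • j) = centeredSingle i j := by
  simp [centeredSingle, Pi.single_apply]

end CenteredSingle

/-! ### The wreath product of `ℚ` with the symmetric group acting on transpositions -/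

section TranspositionWreath

variable (α : Type*) [DecidableEq α]

/-- The semidirect product of the rational functions on the transpositions of `α` with `Perm α`.
The functions are written multiplicatively. -/
abbrev TranspositionWreath : Type _ :=
  (Transposition α → Multiplicative ℚ) ⋊[mulAutArrow] Perm α

variable {α}

theorem TranspositionWreath.map_centeredSingle [Fintype α] (σ : Perm α) (p : Transposition α) :
    mulAutArrow σ (fun q => Multiplicative.ofAdd (centeredSingle p q)) =
      fun q => Multiplicative.ofAdd (centeredSingle (σ • p) q) := by
  funext q
  rw [mulAutArrow_apply_apply]
  change Multiplicative.ofAdd (centeredSingle p (σ⁻¹ • q)) = _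
  rw [← centeredSingle_smul_apply_smul σ, smul_inv_smul]

/-- The lift of a transposition `p` to the wreath product with translation part
`centeredSingle p`.  Like the generators of an Artin group, these lifts satisfy the braid relations
but are not involutions. -/
noncomputable def Transposition.reflection [Fintype α] (p : Transposition α) :
    TranspositionWreath α :=
  ⟨fun q => Multiplicative.ofAdd (centeredSingle p q), p.1⟩

namespace Transposition

variable [Fintype α] {p q : Transposition α}

theorem reflection_sq (p : Transposition α) :
    p.reflection ^ 2 =
      SemidirectProduct.inl fun q => Multiplicative.ofAdd (2 * centeredSingle p q) := by
  have hp : p.1 • p = p := Subtype.ext (mul_inv_cancel_right _ _)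
  rw [sq]
  ext1
  · simp only [reflection, SemidirectProduct.mul_left, TranspositionWreath.map_centeredSingle, hp]
    exact funext fun q => congrArg Multiplicative.ofAdd (two_mul _).symm
  · exact p.mul_self

theorem conj_reflection_sq (w : TranspositionWreath α) (p : Transposition α) :
    w * p.reflection ^ 2 * w⁻¹ = (w.right • p).reflection ^ 2 := by
  have h_map : mulAutArrow w.right (fun q => Multiplicative.ofAdd (2 * centeredSingle p q)) =
      fun q => Multiplicative.ofAdd (2 * centeredSingle (w.right • p) q) := by
    have h := congrArg (· ^ 2) (TranspositionWreath.map_centeredSingle w.right p)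
    rw [← map_pow] at h
    simpa [Pi.pow_def, ← ofAdd_nsmul] using h
  rw [reflection_sq, reflection_sq, mul_inv_eq_iff_eq_mul]
  ext1
  · rw [SemidirectProduct.mul_left, SemidirectProduct.left_inl, h_map, mul_comm]
    simp
  · simp

theorem reflection_mul_comm (h : p.1 * q.1 = q.1 * p.1) :
    p.reflection * q.reflection = q.reflection * p.reflection := by
  have hp : q.1 • p = p := Subtype.ext (by rw [coe_smul, ← h, mul_inv_cancel_right])
  have hq : p.1 • q = q := Subtype.ext (by rw [coe_smul, h, mul_inv_cancel_right])
  ext1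
  · simp only [reflection, SemidirectProduct.mul_left, TranspositionWreath.map_centeredSingle,
      hp, hq]
    exact mul_comm _ _
  · exact h

theorem reflection_mul_braid (h : p.1 * q.1 * p.1 = q.1 * p.1 * q.1) :
    p.reflection * q.reflection * p.reflection = q.reflection * p.reflection * q.reflection := by
  have hp : (p.1 * q.1) • p = q :=
    Subtype.ext (by rw [coe_smul, mul_inv_eq_iff_eq_mul, h, mul_assoc])
  have hq : (q.1 * p.1) • q = p :=
    Subtype.ext (by rw [coe_smul, mul_inv_eq_iff_eq_mul, ← h, mul_assoc])
  have hpq : p.1 • q = q.1 • p := Subtype.ext (by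
    rw [coe_smul, coe_smul, inv_eq_of_mul_eq_one_left p.mul_self,
      inv_eq_of_mul_eq_one_left q.mul_self, h])
  ext1
  · simp only [reflection, SemidirectProduct.mul_left, SemidirectProduct.mul_right,
      TranspositionWreath.map_centeredSingle, hp, hq, hpq]
    ac_rfl
  · exact h

end Transposition

end TranspositionWreath

/-! ### Covers of the symmetric group -/

/-- A group mapping onto the symmetric group through `TranspositionWreath α`, with chosen elements
`twist p` (in an Artin group, squares of conjugates of the generators) over the squares of the
reflections, such that the homomorphisms to `ℚ` from the pure subgroup (the kernel of the map to
`Perm α`) are determined by their values on the twists, and take the same values on the conjugates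
of a twist that lie over the same transposition.  The pure subgroup is written out because the
projection `TranspositionCover.perm` is only available after the structure. -/
structure TranspositionCover (G α : Type*) [Group G] [DecidableEq α] [Fintype α] where
  toWreath : G →* TranspositionWreath α
  twist : Transposition α → G
  perm_surjective : Function.Surjective (SemidirectProduct.rightHom.comp toWreath)
  toWreath_twist : ∀ p, toWreath (twist p) = p.reflection ^ 2
  map_conj_twist : ∀ {μ : G → ℚ},
    IsAdditiveOn (SemidirectProduct.rightHom.comp toWreath).ker μ →
      ∀ g p, μ (g * twist p * g⁻¹) = μ (twist (SemidirectProduct.rightHom.comp toWreath g • p))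
  eq_zero_of_twist : ∀ {μ : G → ℚ},
    IsAdditiveOn (SemidirectProduct.rightHom.comp toWreath).ker μ → (∀ p, μ (twist p) = 0) →
      ∀ x ∈ (SemidirectProduct.rightHom.comp toWreath).ker, μ x = 0

namespace TranspositionCover

variable {G α : Type*} [Group G] [DecidableEq α] [Fintype α] (C : TranspositionCover G α)

/-- The projection of a cover to the symmetric group. -/
abbrev perm : G →* Perm α := SemidirectProduct.rightHom.comp C.toWreath

/-- The translation part of the map to the wreath product. -/
def cocycle (g : G) : Transposition α → ℚ := fun p => Multiplicative.toAdd ((C.toWreath g).left p)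

/-- The pairing of the cocycle with a function on transpositions. -/
noncomputable def pairing (f : Transposition α → ℚ) (g : G) : ℚ := f ⬝ᵥ C.cocycle g

theorem cocycle_twist (p : Transposition α) :
    C.cocycle (C.twist p) = fun q => 2 * centeredSingle p q := by
  unfold cocycle
  rw [C.toWreath_twist, Transposition.reflection_sq]
  rfl

theorem cocycle_mul (g h : G) :
    C.cocycle (g * h) = C.cocycle g + fun p => C.cocycle h ((C.perm g)⁻¹ • p) := by
  funext p
  rw [cocycle, map_mul]
  rfl

theorem twist_mem_ker (p : Transposition α) : C.twist p ∈ C.perm.ker := by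
  rw [MonoidHom.mem_ker, MonoidHom.comp_apply, C.toWreath_twist, Transposition.reflection_sq,
    SemidirectProduct.rightHom_inl]

theorem pairing_mul (f : Transposition α → ℚ) (g h : G) :
    C.pairing f (g * h) = C.pairing f g + C.pairing (fun p => f (C.perm g • p)) h := by
  rw [pairing, cocycle_mul, dotProduct_add]
  congr 1
  refine Fintype.sum_equiv (MulAction.toPerm (C.perm g)⁻¹) _ _ fun p => ?_
  simp

theorem isAdditiveOn_pairing (f : Transposition α → ℚ) :
    IsAdditiveOn C.perm.ker (C.pairing f) := fun x hx y _ => by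
  rw [pairing_mul, MonoidHom.mem_ker.mp hx]
  simp only [one_smul]

theorem pairing_conj (f : Transposition α → ℚ) (g : G) {x : G} (hx : x ∈ C.perm.ker) :
    C.pairing f (g * x * g⁻¹) = C.pairing (fun p => f (C.perm g • p)) x := by
  have h := C.pairing_mul f g g⁻¹
  rw [mul_inv_cancel, (C.isAdditiveOn_pairing f).map_one] at h
  rw [pairing_mul, pairing_mul, map_mul, MonoidHom.mem_ker.mp hx, mul_one, add_right_comm, ← h,
    zero_add]

theorem pairing_twist (f : Transposition α → ℚ) (p : Transposition α) :
    C.pairing f (C.twist p) = 2 * (f p - Finset.univ.expect f) := by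
  rw [pairing, cocycle_twist, ← dotProduct_centeredSingle, ← smul_eq_mul, ← dotProduct_smul]
  rfl

theorem pairing_const (c : ℚ) {x : G} (hx : x ∈ C.perm.ker) : C.pairing (fun _ => c) x = 0 := by
  refine C.eq_zero_of_twist (C.isAdditiveOn_pairing _) (fun p => ?_) x hx
  have : Nonempty (Transposition α) := ⟨p⟩
  rw [pairing_twist, Fintype.expect_const, sub_self, mul_zero]

theorem eq_expect_of_pairing_eq_zero {f : Transposition α → ℚ}
    (hf : ∀ x ∈ C.perm.ker, C.pairing f x = 0) (p : Transposition α) :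
    f p = Finset.univ.expect f := by
  have h := C.pairing_twist f p
  rw [hf _ (C.twist_mem_ker p)] at h
  linarith

/-! ### Automorphisms preserving the pure subgroup -/

section Automorphism

variable {C} {ψ : MulAut G} {ψ' : MulAut (Perm α)} (hψ : ∀ x, C.perm (ψ x) = ψ' (C.perm x))

include hψ in
theorem apply_mem_ker_iff {x : G} : ψ x ∈ C.perm.ker ↔ x ∈ C.perm.ker := by
  rw [MonoidHom.mem_ker, hψ, map_eq_one_iff _ ψ'.injective, MonoidHom.mem_ker]

include hψ in
theorem isAdditiveOn_comp {μ : G → ℚ} (hμ : IsAdditiveOn C.perm.ker μ) :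
    IsAdditiveOn C.perm.ker (μ ∘ ψ) :=
  (hμ.comp ψ.toMonoidHom).mono fun _ hx => (apply_mem_ker_iff hψ).mpr hx

include hψ in
theorem pairing_apply_twist_smul (f : Transposition α → ℚ) (σ : Perm α) (p : Transposition α) :
    C.pairing f (ψ (C.twist (σ • p))) =
      C.pairing (fun q => f (ψ' σ • q)) (ψ (C.twist p)) := by
  obtain ⟨g, rfl⟩ := C.perm_surjective σ
  have h := C.map_conj_twist (isAdditiveOn_comp hψ (C.isAdditiveOn_pairing f)) g p
  rw [← hψ, ← C.pairing_conj f (ψ g) ((apply_mem_ker_iff hψ).mpr (C.twist_mem_ker p)), ← map_inv,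
    ← map_mul, ← map_mul]
  exact h.symm

variable (C ψ) in
/-- The operator on functions on transpositions induced by an automorphism `ψ`: composition of
homomorphisms from the pure subgroup to `ℚ` with `ψ` acts on the pairings with functions of sum
zero, and this is extended by the identity on constants. -/
noncomputable def transfer : (Transposition α → ℚ) →ₗ[ℚ] Transposition α → ℚ where
  toFun f p := C.pairing f (ψ (C.twist p)) + Finset.univ.expect f
  map_add' f g := by
    funext p
    simp only [pairing, add_dotProduct, Pi.add_apply, Finset.expect_add_distrib]
    ring
  map_smul' c f := by
    funext p
    simp only [pairing, smul_dotProduct, Pi.smul_apply, smul_eq_mul, Finset.mul_expect,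
      RingHom.id_apply, mul_add]

theorem transfer_apply (f : Transposition α → ℚ) (p : Transposition α) :
    C.transfer ψ f p = C.pairing f (ψ (C.twist p)) + Finset.univ.expect f := rfl

include hψ in
theorem transfer_smul (f : Transposition α → ℚ) (σ : Perm α) (p : Transposition α) :
    C.transfer ψ f (σ • p) = C.transfer ψ (fun q => f (ψ' σ • q)) p := by
  rw [transfer_apply, transfer_apply, pairing_apply_twist_smul hψ, expect_comp_smul]

include hψ in
theorem pairing_eq_zero_of_comp {f : Transposition α → ℚ}
    (hf : ∀ p, C.pairing f (ψ (C.twist p)) = 0) {x : G} (hx : x ∈ C.perm.ker) :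
    C.pairing f x = 0 := by
  obtain ⟨x, rfl⟩ := ψ.surjective x
  exact C.eq_zero_of_twist (isAdditiveOn_comp hψ (C.isAdditiveOn_pairing f)) hf x
    ((apply_mem_ker_iff hψ).mp hx)

include hψ in
theorem smul_invariant_of_transfer_eq_zero {f : Transposition α → ℚ} (hf : C.transfer ψ f = 0)
    (σ : Perm α) (p : Transposition α) : f (σ • p) = f p := by
  let F : Transposition α → ℚ := (fun q => f (σ • q)) - f
  have hF : C.transfer ψ F = 0 := by
    obtain ⟨σ, rfl⟩ := ψ'.surjective σ
    rw [map_sub, hf, sub_zero]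
    funext q
    rw [← transfer_smul hψ, hf]
    rfl
  have hF_expect : Finset.univ.expect F = 0 :=
    (Finset.expect_sub_distrib _ _ _).trans (sub_eq_zero.mpr (expect_comp_smul σ f))
  have hF_apply := C.eq_expect_of_pairing_eq_zero (f := F) (fun x hx =>
    pairing_eq_zero_of_comp hψ (fun q => by simpa [transfer_apply, hF_expect] using congrFun hF q)
      hx) p
  exact sub_eq_zero.mp (hF_apply.trans hF_expect)

include hψ in
theorem transfer_injective : Function.Injective (C.transfer ψ) := by
  rw [injective_iff_map_eq_zero]
  intro f hf
  funext p
  have : Nonempty (Transposition α) := ⟨p⟩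
  have h_const : f = fun _ => f p := funext fun q => by
    obtain ⟨σ, rfl⟩ := MulAction.exists_smul_eq (Perm α) p q
    exact smul_invariant_of_transfer_eq_zero hψ hf σ p
  have h := congrFun hf p
  rwa [transfer_apply, h_const, C.pairing_const _ ((apply_mem_ker_iff hψ).mpr (C.twist_mem_ker p)),
    Fintype.expect_const, zero_add] at h

include hψ in
theorem isSwap_apply (hα : 5 ≤ Fintype.card α) (p : Transposition α) : (ψ' p.1).IsSwap := by
  refine Transposition.isSwap_of_card_fixed_eq hα ?_ p ?_
  · rw [← map_mul, p.mul_self, map_one]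
  · exact card_filter_fixed_eq_of_intertwines (e := MulAction.toPerm p.1)
      (e' := MulAction.toPerm (ψ' p.1)) (transfer_injective hψ)
      fun f => funext fun q => (transfer_smul hψ f p.1 q).symm

end Automorphism

end TranspositionCover

/-! ### Antisymmetric functions on transpositions -/

namespace Transposition

variable {α : Type*} [DecidableEq α] {z o w : α}

theorem smul_eq_self_comm {p q : Transposition α} : p.1 • q = q ↔ q.1 • p = p := by
  rw [Subtype.ext_iff, Subtype.ext_iff, coe_smul, coe_smul, mul_inv_eq_iff_eq_mul,
    mul_inv_eq_iff_eq_mul, eq_comm]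

theorem apply_eq_self_of_smul_ofNe_eq_self (h : z ≠ o) {p : Transposition α}
    (hp : p.1 • ofNe h = ofNe h) (hne : p ≠ ofNe h) : p.1 z = z ∧ p.1 o = o := by
  refine ((smul_ofNe_eq_self_iff_of_mul_self p.mul_self h).mp hp).resolve_right fun hzo => hne ?_
  obtain rfl : p.1 z = o := hzo
  exact p.eq_ofNe h.symm

/-- The number of endpoints at `z` minus the number of endpoints at `o`, for a transposition viewed
as an edge. -/
def degreeDiff (z o : α) (p : Transposition α) : ℚ :=
  (if p.1 z = z then 0 else 1) - if p.1 o = o then 0 else 1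

theorem degreeDiff_swap (z o : α) (p : Transposition α) :
    degreeDiff o z p = -degreeDiff z o p :=
  (neg_sub _ _).symm

theorem degreeDiff_smul (z o : α) (σ : Perm α) (p : Transposition α) :
    degreeDiff z o (σ • p) = degreeDiff (σ⁻¹ z) (σ⁻¹ o) p := by
  simp only [degreeDiff, coe_smul_apply_eq_iff]

theorem degreeDiff_ofNe (hzw : z ≠ w) (hoz : o ≠ z) (how : o ≠ w) :
    degreeDiff z o (ofNe hzw) = 1 := by
  rw [degreeDiff, if_neg (by rwa [ofNe_apply_left, eq_comm]),
    if_pos (show (ofNe hzw).1 o = o from swap_apply_of_ne_of_ne hoz how), sub_zero]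

theorem expect_degreeDiff [Fintype α] (z o : α) : Finset.univ.expect (degreeDiff z o) = 0 := by
  have h := expect_comp_smul (swap z o) (degreeDiff z o)
  simp only [degreeDiff_smul, swap_inv, swap_apply_left, swap_apply_right, degreeDiff_swap z o,
    Finset.expect_neg_distrib] at h
  linarith

/-- A function on transpositions that changes sign under `swap z o` and is invariant under the
transpositions fixing `z` and `o`. -/
structure IsAntisymmetric (z o : α) (f : Transposition α → ℚ) : Prop where
  swap_smul : ∀ p, f (swap z o • p) = -f p
  smul : ∀ q : Transposition α, q.1 z = z → q.1 o = o → ∀ p, f (q.1 • p) = f p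

theorem isAntisymmetric_degreeDiff (z o : α) : IsAntisymmetric z o (degreeDiff z o) where
  swap_smul p := by
    rw [degreeDiff_smul, swap_inv, swap_apply_left, swap_apply_right, degreeDiff_swap]
  smul q hz ho p := by
    rw [degreeDiff_smul, Perm.inv_eq_iff_eq.mpr hz.symm, Perm.inv_eq_iff_eq.mpr ho.symm]

namespace IsAntisymmetric

variable {f g : Transposition α → ℚ}

theorem sub_smul (hf : IsAntisymmetric z o f) (hg : IsAntisymmetric z o g) (c : ℚ) :
    IsAntisymmetric z o (f - c • g) where
  swap_smul p := by
    simp only [Pi.sub_apply, Pi.smul_apply, hf.swap_smul, hg.swap_smul, smul_neg, neg_sub]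
    ring
  smul q hz ho p := by
    simp only [Pi.sub_apply, Pi.smul_apply, hf.smul q hz ho, hg.smul q hz ho]

theorem apply_eq_of_apply_ne (hf : IsAntisymmetric z o f) (hzw : z ≠ w) (how : o ≠ w)
    {p : Transposition α} (hz : p.1 z ≠ z) (ho : p.1 z ≠ o) : f p = f (ofNe hzw) := by
  by_cases hpw : p.1 z = w
  · subst hpw
    exact congrArg f (p.eq_ofNe hz)
  · have h_smul : swap w (p.1 z) • ofNe hzw = p := by
      rw [smul_ofNe]
      refine Subtype.ext ?_
      change swap (swap w (p.1 z) z) (swap w (p.1 z) w) = p.1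
      rw [swap_apply_left, swap_apply_of_ne_of_ne hzw hz.symm, ← p.coe_eq_swap hz]
    rw [← hf.smul (ofNe (Ne.symm hpw)) (swap_apply_of_ne_of_ne hzw hz.symm)
      (swap_apply_of_ne_of_ne how ho.symm) (ofNe hzw)]
    exact congrArg f h_smul.symm

theorem eq_zero (hf : IsAntisymmetric z o f) (hzo : z ≠ o) (hzw : z ≠ w) (how : o ≠ w)
    (h : f (ofNe hzw) = 0) : f = 0 := by
  funext p
  by_cases h_fix : swap z o • p = p
  · have := hf.swap_smul p
    rw [h_fix] at this
    exact self_eq_neg.mp this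
  have h_moves : ¬ (p.1 z = z ∧ p.1 o = o ∨ p.1 z = o) := fun h' =>
    h_fix (smul_eq_self_comm.mp ((smul_ofNe_eq_self_iff_of_mul_self p.mul_self hzo).mpr h'))
  by_cases hz : p.1 z = z
  · have ho : p.1 o ≠ o := fun ho => h_moves (Or.inl ⟨hz, ho⟩)
    have h_swap : (swap z o • p).1 z = swap z o (p.1 o) := by
      rw [coe_smul, mul_apply, mul_apply, swap_inv, swap_apply_left]
    have hoz : p.1 o ≠ z := fun hoz => hzo (p.1.injective (hz.trans hoz.symm))
    have h_zero := hf.apply_eq_of_apply_ne (p := swap z o • p) hzw how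
      (by rwa [h_swap, swap_apply_of_ne_of_ne hoz ho])
      (by rwa [h_swap, swap_apply_of_ne_of_ne hoz ho])
    rw [hf.swap_smul, h] at h_zero
    exact neg_eq_zero.mp h_zero
  · exact (hf.apply_eq_of_apply_ne hzw how hz fun ho => h_moves (Or.inr ho)).trans h

end IsAntisymmetric

end Transposition

/-! ### Scaling of rational characters by automorphisms -/

section Scaling

variable {G : Type*} [Group G] {K : Subgroup G} {μ : G → ℚ}

theorem IsAdditiveOn.mem_span (hμ : IsAdditiveOn K μ) {S : Set G} (hS : Subgroup.closure S = K)
    {x : G} (hx : x ∈ K) : μ x ∈ Submodule.span ℤ (μ '' S) := by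
  subst hS
  induction hx using Subgroup.closure_induction with
  | mem x hx => exact Submodule.subset_span ⟨x, hx, rfl⟩
  | one => exact hμ.map_one ▸ Submodule.zero_mem _
  | mul x y hx hy ihx ihy => exact hμ hx hy ▸ Submodule.add_mem _ ihx ihy
  | inv x hx ih => exact hμ.map_inv hx ▸ Submodule.neg_mem _ ih

theorem IsAdditiveOn.isIntegral_of_scaling (hμ : IsAdditiveOn K μ) (hK : K.FG) {ψ : G → G}
    (hψ : ∀ x ∈ K, ψ x ∈ K) {q : ℚ} (hq : ∀ x ∈ K, μ (ψ x) = q * μ x) {x : G} (hx : x ∈ K)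
    (hx₀ : μ x ≠ 0) : IsIntegral ℤ q := by
  obtain ⟨S, hS⟩ := hK
  refine isIntegral_of_smul_mem_submodule (Submodule.span ℤ (μ '' (S : Set G))) ?_
    (Submodule.fg_span (S.finite_toSet.image μ)) q fun y hy => ?_
  · exact fun h => hx₀ ((Submodule.mem_bot ℤ).mp (h ▸ hμ.mem_span hS hx))
  · induction hy using Submodule.span_induction with
    | mem y hy =>
      obtain ⟨s, hs, rfl⟩ := hy
      have hsK : s ∈ K := hS ▸ Subgroup.subset_closure hs
      rw [smul_eq_mul, ← hq s hsK]
      exact hμ.mem_span hS (hψ s hsK)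
    | zero => simp
    | add y z _ _ ihy ihz => exact smul_add q y z ▸ Submodule.add_mem _ ihy ihz
    | smul n y _ ih => exact smul_comm n q y ▸ Submodule.smul_mem _ n ih

theorem IsAdditiveOn.eq_one_or_eq_neg_one_of_scaling (hμ : IsAdditiveOn K μ) (hK : K.FG)
    {ψ : MulAut G} (hψ : ∀ x, ψ x ∈ K ↔ x ∈ K) {q : ℚ} (hq : ∀ x ∈ K, μ (ψ x) = q * μ x) {x : G}
    (hx : x ∈ K) (hx₀ : μ x ≠ 0) : q = 1 ∨ q = -1 := by
  have hψ_symm (y : G) (hy : y ∈ K) : ψ.symm y ∈ K := by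
    rwa [← hψ, MulEquiv.apply_symm_apply]
  have hq₀ : q ≠ 0 := by
    rintro rfl
    have h := hq _ (hψ_symm x hx)
    rw [MulEquiv.apply_symm_apply, zero_mul] at h
    exact hx₀ h
  have hq_inv (y : G) (hy : y ∈ K) : μ (ψ.symm y) = q⁻¹ * μ y := by
    rw [eq_inv_mul_iff_mul_eq₀ hq₀, ← hq _ (hψ_symm y hy), MulEquiv.apply_symm_apply]
  obtain ⟨m, hm⟩ := IsIntegrallyClosed.isIntegral_iff.mp
    (hμ.isIntegral_of_scaling hK (fun y => (hψ y).mpr) hq hx hx₀)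
  obtain ⟨n, hn⟩ := IsIntegrallyClosed.isIntegral_iff.mp
    (hμ.isIntegral_of_scaling hK hψ_symm hq_inv hx hx₀)
  have hmn : m * n = 1 := by
    have h := mul_inv_cancel₀ hq₀
    rw [← hn, ← hm, eq_intCast, eq_intCast] at h
    exact_mod_cast h
  rw [← hm]
  exact (Int.eq_one_or_neg_one_of_mul_eq_one hmn).imp (by simp +contextual) (by simp +contextual)

end Scaling

theorem Transposition.exists_mem_alternatingGroup_smul_eq {α : Type*} [DecidableEq α] [Fintype α]
    (p q : Transposition α) : ∃ a ∈ alternatingGroup α, a • p = q := by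
  obtain ⟨σ, rfl⟩ := MulAction.exists_smul_eq (Perm α) p q
  by_cases hσ : σ ∈ alternatingGroup α
  · exact ⟨σ, hσ, rfl⟩
  · refine ⟨σ * p.1, ?_, ?_⟩
    · rw [mem_alternatingGroup, Perm.sign_mul, p.2.sign_eq,
        (Int.units_eq_one_or _).resolve_left (mem_alternatingGroup.not.mp hσ)]
      rfl
    · rw [mul_smul]
      exact congrArg _ (Subtype.ext (mul_inv_cancel_right _ _))

theorem exists_ne_and_ne {α : Type*} [Fintype α] (hα : 3 ≤ Fintype.card α) (x y : α) :
    ∃ z, x ≠ z ∧ y ≠ z := by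
  classical
  obtain ⟨z, -, hz⟩ := Finset.exists_mem_notMem_of_card_lt_card (s := {x, y}) (t := Finset.univ)
    (Finset.card_le_two.trans_lt hα)
  rw [Finset.mem_insert, Finset.mem_singleton, not_or] at hz
  exact ⟨z, Ne.symm hz.1, Ne.symm hz.2⟩

theorem perm_eq_one_of_mem_center {α : Type*} [Fintype α]
    (hα : 3 ≤ Fintype.card α) {σ : Perm α} (hσ : σ ∈ Subgroup.center (Perm α)) : σ = 1 := by
  classical
  ext x
  by_contra hx
  change σ x ≠ x at hx
  obtain ⟨w, hxw, hw⟩ := exists_ne_and_ne hα x (σ x)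
  have h : swap (σ x) w (σ x) = σ (swap (σ x) w x) :=
    congrArg (· x) (Subgroup.mem_center_iff.mp hσ (swap (σ x) w))
  rw [swap_apply_left, swap_apply_of_ne_of_ne hx.symm hxw] at h
  exact hw h.symm

theorem exists_mem_alternatingGroup_apply_eq {α : Type*} [DecidableEq α] [Fintype α]
    (hα : 4 ≤ Fintype.card α) {z o : α} (hzo : z ≠ o) :
    ∃ e ∈ alternatingGroup α, e z = o ∧ e o = z := by
  obtain ⟨w, hw, u, hu, hwu⟩ := Finset.one_lt_card.mp
    (show 1 < ({z, o}ᶜ : Finset α).card by rw [Finset.card_compl, Finset.card_pair hzo]; omega)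
  simp only [Finset.mem_compl, Finset.mem_insert, Finset.mem_singleton, not_or] at hw hu
  refine ⟨swap z o * swap w u, ?_, ?_, ?_⟩
  · rw [mem_alternatingGroup, Perm.sign_mul, sign_swap hzo, sign_swap hwu, Int.units_mul_self]
  · rw [mul_apply, swap_apply_of_ne_of_ne (Ne.symm hw.1) (Ne.symm hu.1), swap_apply_left]
  · rw [mul_apply, swap_apply_of_ne_of_ne (Ne.symm hw.2) (Ne.symm hu.2), swap_apply_right]

/-! ### Covers of symmetric groups have property `R_∞` -/

namespace TranspositionCover

open Transposition

variable {G α : Type*} [Group G] [DecidableEq α] [Fintype α] (C : TranspositionCover G α)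
  {z o : α}

/-- The homomorphism from the pure subgroup of `C` to `ℚ` with value `2 * degreeDiff z o p` on the
twist over `p`. -/
noncomputable def character (z o : α) : G → ℚ := C.pairing (degreeDiff z o)

theorem character_twist (z o : α) (p : Transposition α) :
    C.character z o (C.twist p) = 2 * degreeDiff z o p := by
  rw [character, pairing_twist, expect_degreeDiff, sub_zero]

theorem character_conj (z o : α) (g : G) {x : G} (hx : x ∈ C.perm.ker) :
    C.character z o (g * x * g⁻¹) = C.character ((C.perm g)⁻¹ z) ((C.perm g)⁻¹ o) x := by
  simp only [character, C.pairing_conj _ g hx, degreeDiff_smul]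

theorem character_swap (z o : α) (x : G) : C.character o z x = -C.character z o x := by
  rw [character, character, pairing, pairing, ← neg_dotProduct]
  exact congrArg (· ⬝ᵥ _) (funext (degreeDiff_swap z o))

theorem character_conj_of_apply_eq {z o : α} {g x : G} (hz : C.perm g z = o) (ho : C.perm g o = z)
    (hx : x ∈ C.perm.ker) : C.character z o (g * x * g⁻¹) = -C.character z o x := by
  rw [C.character_conj z o g hx, Perm.inv_eq_iff_eq.mpr ho.symm, Perm.inv_eq_iff_eq.mpr hz.symm,
    character_swap]

theorem exists_character_twist_ne_zero (hα : 3 ≤ Fintype.card α) {z o : α} (hzo : z ≠ o) :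
    ∃ p, C.character z o (C.twist p) ≠ 0 := by
  obtain ⟨w, hzw, how⟩ := exists_ne_and_ne hα z o
  refine ⟨ofNe hzw, ?_⟩
  rw [character_twist, degreeDiff_ofNe hzw hzo.symm how]
  norm_num

variable {C} {ψ : MulAut G} {ψ' : MulAut (Perm α)} (hψ : ∀ x, C.perm (ψ x) = ψ' (C.perm x))
  (hα : 5 ≤ Fintype.card α)

include hψ hα in
theorem isAntisymmetric_character_apply_twist (hzo : z ≠ o)
    (hfix : ψ' (swap z o) = swap z o) :
    IsAntisymmetric z o fun p => C.character z o (ψ (C.twist p)) where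
  swap_smul p := by
    rw [character, pairing_apply_twist_smul hψ, hfix, pairing, pairing, ← neg_dotProduct]
    exact congrArg (· ⬝ᵥ _) (funext (isAntisymmetric_degreeDiff z o).swap_smul)
  smul q hz ho p := by
    let q' : Transposition α := ⟨ψ' q.1, isSwap_apply hψ hα q⟩
    have hq : q.1 • ofNe hzo = ofNe hzo :=
      (smul_ofNe_eq_self_iff_of_mul_self q.mul_self hzo).mpr (Or.inl ⟨hz, ho⟩)
    have hq' : q'.1 • ofNe hzo = ofNe hzo := by
      have h := congrArg (ψ' ∘ Subtype.val) hq
      simp only [Function.comp_apply, coe_smul, map_mul, map_inv] at h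
      refine Subtype.ext (Eq.trans ?_ (h.trans hfix))
      rw [coe_smul]
      exact congrArg (ψ' q.1 * · * _) hfix.symm
    have hne : q' ≠ ofNe hzo := fun h => by
      have h_eq : q.1 = swap z o := ψ'.injective ((congrArg Subtype.val h).trans hfix.symm)
      rw [h_eq, swap_apply_left] at hz
      exact hzo hz.symm
    obtain ⟨hz', ho'⟩ := apply_eq_self_of_smul_ofNe_eq_self hzo hq' hne
    rw [character, pairing_apply_twist_smul hψ]
    exact congrArg (C.pairing · _) (funext ((isAntisymmetric_degreeDiff z o).smul q' hz' ho'))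

theorem eq_of_twist {μ ν : G → ℚ} (hμ : IsAdditiveOn C.perm.ker μ) (hν : IsAdditiveOn C.perm.ker ν)
    (h : ∀ p, μ (C.twist p) = ν (C.twist p)) {x : G} (hx : x ∈ C.perm.ker) : μ x = ν x :=
  sub_eq_zero.mp (C.eq_zero_of_twist (hμ.sub hν) (fun p => sub_eq_zero.mpr (h p)) x hx)

include hψ hα in
theorem exists_character_apply_eq_mul (hzo : z ≠ o) (hfix : ψ' (swap z o) = swap z o) :
    ∃ q : ℚ, ∀ x ∈ C.perm.ker, C.character z o (ψ x) = q * C.character z o x := by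
  obtain ⟨w, hzw, how⟩ := exists_ne_and_ne (by omega) z o
  let c := C.character z o (ψ (C.twist (ofNe hzw)))
  have h_twist := ((isAntisymmetric_character_apply_twist hψ hα hzo hfix).sub_smul
    (isAntisymmetric_degreeDiff z o) c).eq_zero hzo hzw how
    (by simp [c, degreeDiff_ofNe hzw hzo.symm how])
  refine ⟨c / 2, fun x hx => ?_⟩
  refine eq_of_twist (isAdditiveOn_comp hψ (C.isAdditiveOn_pairing _))
    ((C.isAdditiveOn_pairing (degreeDiff z o)).const_mul (c / 2)) (fun p => ?_) hx
  change _ = c / 2 * C.character z o (C.twist p)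
  rw [character_twist, ← mul_assoc, div_mul_cancel₀ c two_ne_zero]
  exact sub_eq_zero.mp (congrFun h_twist p)

include hψ hα in
theorem character_apply_eq_or_eq_neg [Group.FG G] (hzo : z ≠ o) (hfix : ψ' (swap z o) = swap z o) :
    (∀ x ∈ C.perm.ker, C.character z o (ψ x) = C.character z o x) ∨
      ∀ x ∈ C.perm.ker, C.character z o (ψ x) = -C.character z o x := by
  obtain ⟨q, hq⟩ := exists_character_apply_eq_mul hψ hα hzo hfix
  obtain ⟨p, hp⟩ := C.exists_character_twist_ne_zero (by omega) hzo
  obtain rfl | rfl := (C.isAdditiveOn_pairing _).eq_one_or_eq_neg_one_of_scaling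
    ((Group.fg_iff_subgroup_fg _).mp inferInstance) (fun x => apply_mem_ker_iff hψ) hq
    (C.twist_mem_ker p) hp
  · exact Or.inl fun x hx => (hq x hx).trans (one_mul _)
  · exact Or.inr fun x hx => (hq x hx).trans (neg_one_mul _)

include hψ hα in
theorem exists_mem_alternatingGroup_character_conj_apply [Group.FG G] (hzo : z ≠ o) :
    ∃ a ∈ alternatingGroup α, ∀ c, C.perm c = a → ∀ x ∈ C.perm.ker,
      C.character z o (c * ψ x * c⁻¹) = C.character z o x := by
  obtain ⟨a, ha, h_smul⟩ := exists_mem_alternatingGroup_smul_eq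
    ⟨ψ' (swap z o), isSwap_apply hψ hα (ofNe hzo)⟩ (ofNe hzo)
  obtain ⟨g, rfl⟩ := C.perm_surjective a
  let ψ₁ : MulAut G := MulAut.conj g * ψ
  have hψ₁ (x : G) : C.perm (ψ₁ x) = (MulAut.conj (C.perm g) * ψ') (C.perm x) := by
    change C.perm (g * ψ x * g⁻¹) = C.perm g * ψ' (C.perm x) * (C.perm g)⁻¹
    rw [map_mul, map_mul, map_inv, hψ]
  have conj_eq (c x : G) : c * ψ x * c⁻¹ = c * g⁻¹ * ψ₁ x * (c * g⁻¹)⁻¹ := by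
    simp [ψ₁, mul_assoc]
  rcases character_apply_eq_or_eq_neg hψ₁ hα hzo (congrArg Subtype.val h_smul) with h | h
  · refine ⟨C.perm g, ha, fun c hc x hx => ?_⟩
    rw [conj_eq, character_conj _ _ _ _ ((apply_mem_ker_iff hψ₁).mpr hx), map_mul, map_inv, hc,
      mul_inv_cancel, inv_one, one_apply, one_apply, h x hx]
  · obtain ⟨e, he, hez, heo⟩ := exists_mem_alternatingGroup_apply_eq (by omega) hzo
    refine ⟨e * C.perm g, mul_mem he ha, fun c hc x hx => ?_⟩
    have hcg : C.perm (c * g⁻¹) = e := by rw [map_mul, map_inv, hc, mul_inv_cancel_right]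
    rw [conj_eq, character_conj_of_apply_eq C (by rwa [hcg]) (by rwa [hcg])
      ((apply_mem_ker_iff hψ₁).mpr hx), h x hx, neg_neg]

theorem propertyRInfinity [Group.FG G] (C : TranspositionCover G α) (hα : 5 ≤ Fintype.card α) :
    PropertyRInfinity G := fun φ => by
  obtain ⟨k, hk, hφk, h_lift⟩ := exists_pow_forall_alternatingGroup_lift
    (hα.trans_eq Nat.card_eq_fintype_card.symm) C.perm_surjective φ
  obtain ⟨ψ', hψ⟩ := exists_mulAut_apply_eq C.perm_surjective hφk
  obtain ⟨z, o, hzo⟩ := Fintype.exists_pair_of_one_lt_card (α := α) (by omega)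
  obtain ⟨a, ha, h_char⟩ := exists_mem_alternatingGroup_character_conj_apply hψ hα hzo
  obtain ⟨e, he, hez, heo⟩ := exists_mem_alternatingGroup_apply_eq (by omega) hzo
  obtain ⟨d, rfl, hd⟩ := h_lift a ha
  obtain ⟨e, rfl, h_ker⟩ := h_lift e he
  obtain ⟨p, hp⟩ := C.exists_character_twist_ne_zero (by omega) hzo
  have h_pow (j : ℕ) := exists_conj_mul_pow_eq φ C.perm hd (j := j)
  obtain ⟨c, hc, h_pow_k⟩ := h_pow k hk le_rfl
  refine ReidemeisterInfinite.of_conj_mul d (reidemeisterInfinite_of_pow_invariant hk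
    (K := C.perm.ker) (fun x hx => ?_) (C.isAdditiveOn_pairing (degreeDiff z o)) (fun x hx => ?_)
    (e := e) (fun i hi hik => ?_) (fun x hx => C.character_conj_of_apply_eq hez heo hx)
    (C.twist_mem_ker p) hp)
  · rw [h_pow_k]
    exact C.perm.normal_ker.conj_mem _ (hφk x hx) c
  · rw [h_pow_k]
    exact h_char c hc x hx
  · obtain ⟨c, -, h⟩ := h_pow i hi hik.le
    rw [h]
    exact C.perm.normal_ker.conj_mem _ (h_ker i hi hik) c

/-! ### Central quotients of covers -/

section Quotient

variable (C : TranspositionCover G α)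

theorem cocycle_eq_zero_of_mem_center {z : G} (hz : z ∈ Subgroup.center G) (hz' : z ∈ C.perm.ker) :
    C.cocycle z = 0 := by
  funext p
  have h_const (q : Transposition α) : C.cocycle z q = C.cocycle z p := by
    obtain ⟨σ, rfl⟩ := MulAction.exists_smul_eq (Perm α) p q
    obtain ⟨g, rfl⟩ := C.perm_surjective σ
    have h := congrFun (congrArg C.cocycle (Subgroup.mem_center_iff.mp hz g)) (C.perm g • p)
    rw [cocycle_mul, cocycle_mul, MonoidHom.mem_ker.mp hz'] at h
    simp only [Pi.add_apply, inv_smul_smul, inv_one, one_smul] at h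
    linarith
  have h_sum := C.pairing_const 1 hz'
  rw [pairing, funext h_const, dotProduct, Finset.sum_const, one_mul, nsmul_eq_mul] at h_sum
  exact (mul_eq_zero.mp h_sum).resolve_left
    (Nat.cast_ne_zero.mpr (Finset.card_ne_zero_of_mem (Finset.mem_univ p)))

theorem center_le_ker_toWreath (hα : 3 ≤ Fintype.card α) :
    Subgroup.center G ≤ C.toWreath.ker := fun z hz => by
  have h_perm : C.perm z = 1 := perm_eq_one_of_mem_center hα
    (Subgroup.mem_center_iff.mpr fun σ => by
      obtain ⟨g, rfl⟩ := C.perm_surjective σ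
      rw [← map_mul, ← map_mul, Subgroup.mem_center_iff.mp hz g])
  exact SemidirectProduct.ext (C.cocycle_eq_zero_of_mem_center hz h_perm) h_perm

/-- The quotient of a cover by a normal subgroup on which the map to the wreath product is
trivial. -/
def quotient (N : Subgroup G) [N.Normal] (hN : N ≤ C.toWreath.ker) :
    TranspositionCover (G ⧸ N) α where
  toWreath := QuotientGroup.lift N C.toWreath hN
  twist p := C.twist p
  perm_surjective σ := by
    obtain ⟨g, hg⟩ := C.perm_surjective σ
    exact ⟨(g : G ⧸ N), hg⟩
  toWreath_twist := C.toWreath_twist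
  map_conj_twist hμ := by
    rintro ⟨g⟩ p
    exact C.map_conj_twist (hμ.comp (QuotientGroup.mk' N)) g p
  eq_zero_of_twist hμ h := by
    rintro ⟨x⟩ hx
    exact C.eq_zero_of_twist (hμ.comp (QuotientGroup.mk' N)) h x hx

end Quotient

end TranspositionCover

/-! ### Adjacent transpositions -/

theorem swap_mul_swap_mul_swap_braid {α : Type*} [DecidableEq α] {a b c : α} (hab : a ≠ b)
    (hbc : b ≠ c) (hac : a ≠ c) :
    swap a b * swap b c * swap a b = swap b c * swap a b * swap b c := by
  rw [swap_mul_swap_mul_swap hab hac, swap_comm a b, swap_comm b c,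
    swap_mul_swap_mul_swap hbc.symm hac.symm, swap_comm]

namespace Transposition

variable {n : ℕ}

/-- The transposition of `i` and `i + 1` in `Fin n`. -/
def adjacent (i : ℕ) (h : i + 1 < n) : Transposition (Fin n) :=
  ofNe (x := ⟨i, Nat.lt_of_succ_lt h⟩) (y := ⟨i + 1, h⟩) (by simp)

theorem adjacent_mul_braid {i : ℕ} (h : i + 1 + 1 < n) :
    (adjacent i (Nat.lt_of_succ_lt h)).1 * (adjacent (i + 1) h).1 *
        (adjacent i (Nat.lt_of_succ_lt h)).1 =
      (adjacent (i + 1) h).1 * (adjacent i (Nat.lt_of_succ_lt h)).1 * (adjacent (i + 1) h).1 :=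
  swap_mul_swap_mul_swap_braid (by simp) (by simp) (by simp; omega)

theorem adjacent_mul_comm {i j : ℕ} (hij : i + 1 < j) (hj : j + 1 < n) :
    (adjacent i (by omega)).1 * (adjacent j hj).1 =
      (adjacent j hj).1 * (adjacent i (by omega)).1 :=
  (disjoint_swap_swap (by simp; omega)).commute

theorem mem_orbit_closure_adjacent {m i j : ℕ} (hmi : m ≤ i) (hij : i ≤ j) (hj : j < n) :
    (⟨j, hj⟩ : Fin n) ∈ MulAction.orbit
      (Subgroup.closure {σ | ∃ k h, m ≤ k ∧ σ = (adjacent (n := n) k h).1}) ⟨i, by omega⟩ := by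
  induction j, hij using Nat.le_induction with
  | base => exact MulAction.mem_orbit_self _
  | succ j hij ih =>
    rw [← MulAction.orbit_eq_iff.mpr (ih (by omega))]
    exact ⟨⟨_, Subgroup.subset_closure ⟨j, hj, by omega, rfl⟩⟩, swap_apply_left _ _⟩

theorem mem_closure_adjacent {m : ℕ} {τ : Perm (Fin n)} (hτ : ∀ x : Fin n, x.val < m → τ x = x) :
    τ ∈ Subgroup.closure {σ | ∃ k h, m ≤ k ∧ σ = (adjacent (n := n) k h).1} := by
  refine (mem_closure_isSwap ?_).mpr ⟨Set.toFinite _, fun x => ?_⟩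
  · rintro _ ⟨k, h, -, rfl⟩
    exact (adjacent k h).2
  obtain hx | hx := lt_or_ge x.val m
  · rw [hτ x hx]
    exact MulAction.mem_orbit_self x
  have hx' : m ≤ (τ x).val := by
    by_contra! h
    rw [τ.injective (hτ _ h)] at h
    omega
  obtain h | h := le_total x.val (τ x).val
  · exact mem_orbit_closure_adjacent hx h (τ x).2
  · exact MulAction.mem_orbit_symm.mp (mem_orbit_closure_adjacent hx' h x.2)

end Transposition

/-! ### Artin groups of type D -/

theorem isConj_of_mul_mul_eq {G : Type*} [Group G] {a b : G} (h : a * b * a = b * a * b) :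
    IsConj a b :=
  isConj_iff.mpr ⟨a * b, by rw [h, mul_inv_rev, mul_assoc, mul_inv_cancel_left,
    mul_inv_cancel_right]⟩

namespace ArtinD

variable {n : ℕ}

/-- The generator `t_{i+1}` of the Artin group of type `D_n`. -/
abbrev gen (i : Fin n) : ArtinD n := PresentedGroup.of i

theorem gen_mul_braid {i j : Fin n} (h : dnBraid n i j) :
    gen i * gen j * gen i = gen j * gen i * gen j := by
  obtain rfl | hij := eq_or_ne i j
  · rfl
  · exact mul_inv_eq_one.mp (PresentedGroup.one_of_mem ⟨i, j, hij, Or.inl ⟨h, rfl⟩⟩)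

theorem gen_mul_comm {i j : Fin n} (h : ¬dnBraid n i j) : gen i * gen j = gen j * gen i := by
  obtain rfl | hij := eq_or_ne i j
  · rfl
  · exact mul_inv_eq_one.mp (PresentedGroup.one_of_mem ⟨i, j, hij, Or.inr ⟨h, rfl⟩⟩)

theorem isConj_gen (hn : 3 ≤ n) (i j : Fin n) : IsConj (gen i) (gen j) := by
  suffices h : ∀ k (hk : k < n), IsConj (gen ⟨0, by omega⟩) (gen ⟨k, hk⟩) from
    (h i i.2).symm.trans (h j j.2)
  intro k hk
  induction k using Nat.strong_induction_on with
  | _ k ih =>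
    obtain rfl | hk0 := k.eq_zero_or_pos
    · exact IsConj.refl _
    obtain hk' | hk' : k ≤ n - 2 ∨ k = n - 1 := by omega
    · exact (ih (k - 1) (by omega) (by omega)).trans
        (isConj_of_mul_mul_eq (gen_mul_braid (by simp only [dnBraid]; omega)))
    · exact (ih (n - 3) (by omega) (by omega)).trans
        (isConj_of_mul_mul_eq (gen_mul_braid (Or.inr (Or.inr (Or.inl ⟨rfl, hk'⟩)))))

/-- The image of the generator `gen i` in the symmetric group: the two generators at the fork of
the Coxeter graph have the same image. -/
def genTransposition (hn : 3 ≤ n) (i : Fin n) : Transposition (Fin n) :=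
  Transposition.adjacent (min i (n - 2)) (by omega)

theorem genTransposition_mul_braid (hn : 3 ≤ n) {i j : Fin n} (h : dnBraid n i j) :
    (genTransposition hn i).1 * (genTransposition hn j).1 * (genTransposition hn i).1 =
      (genTransposition hn j).1 * (genTransposition hn i).1 * (genTransposition hn j).1 := by
  obtain hij | hij : min (j : ℕ) (n - 2) = min (i : ℕ) (n - 2) + 1 ∨
      min (i : ℕ) (n - 2) = min (j : ℕ) (n - 2) + 1 := by
    unfold dnBraid at h
    omega
  · simp only [genTransposition, hij]
    exact Transposition.adjacent_mul_braid (by omega)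
  · simp only [genTransposition, hij]
    exact (Transposition.adjacent_mul_braid (by omega)).symm

theorem genTransposition_mul_comm (hn : 3 ≤ n) {i j : Fin n} (h : ¬dnBraid n i j) :
    (genTransposition hn i).1 * (genTransposition hn j).1 =
      (genTransposition hn j).1 * (genTransposition hn i).1 := by
  obtain hij | hij | hij : min (i : ℕ) (n - 2) = min (j : ℕ) (n - 2) ∨
      min (i : ℕ) (n - 2) + 1 < min (j : ℕ) (n - 2) ∨
      min (j : ℕ) (n - 2) + 1 < min (i : ℕ) (n - 2) := by
    unfold dnBraid at h
    omega
  · simp only [genTransposition, hij]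
  · exact Transposition.adjacent_mul_comm hij (by omega)
  · exact (Transposition.adjacent_mul_comm hij (by omega)).symm

theorem genTransposition_of_lt (hn : 3 ≤ n) {i : ℕ} (h : i + 1 < n) :
    genTransposition hn ⟨i, by omega⟩ = Transposition.adjacent i h := by
  have hi : min i (n - 2) = i := by omega
  simp only [genTransposition, hi]

/-- The homomorphism sending each generator to the reflection of its transposition. -/
noncomputable def toWreath (hn : 3 ≤ n) : ArtinD n →* TranspositionWreath (Fin n) :=
  PresentedGroup.toGroup (f := fun i => (genTransposition hn i).reflection) (by
    rintro r ⟨i, j, -, ⟨h, rfl⟩ | ⟨h, rfl⟩⟩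
    · simpa only [map_mul, map_inv, FreeGroup.lift_apply_of, mul_inv_eq_one] using
        Transposition.reflection_mul_braid (genTransposition_mul_braid hn h)
    · simpa only [map_mul, map_inv, FreeGroup.lift_apply_of, mul_inv_eq_one] using
        Transposition.reflection_mul_comm (genTransposition_mul_comm hn h))

theorem toWreath_gen (hn : 3 ≤ n) (i : Fin n) :
    toWreath hn (gen i) = (genTransposition hn i).reflection :=
  PresentedGroup.toGroup.of _

/-- The projection to the symmetric group. -/
noncomputable abbrev toPerm (hn : 3 ≤ n) : ArtinD n →* Perm (Fin n) :=
  SemidirectProduct.rightHom.comp (toWreath hn)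

theorem toPerm_gen (hn : 3 ≤ n) (i : Fin n) : toPerm hn (gen i) = (genTransposition hn i).1 :=
  congrArg SemidirectProduct.right (toWreath_gen hn i)

theorem toPerm_gen_of_lt (hn : 3 ≤ n) {i : ℕ} (h : i + 1 < n) :
    toPerm hn (gen ⟨i, by omega⟩) = (Transposition.adjacent i h).1 := by
  rw [toPerm_gen, genTransposition_of_lt hn h]

theorem toPerm_surjective (hn : 3 ≤ n) : Function.Surjective (toPerm hn) := fun σ => by
  refine (Subgroup.closure_le (toPerm hn).range).mpr ?_
    (Transposition.mem_closure_adjacent (m := 0) fun x hx => absurd hx (Nat.not_lt_zero _))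
  rintro _ ⟨i, h, -, rfl⟩
  exact ⟨_, toPerm_gen_of_lt hn h⟩

theorem exists_commute_gen_zero (hn : 3 ≤ n) {σ : Perm (Fin n)}
    (hσ : σ • genTransposition hn ⟨0, by omega⟩ = genTransposition hn ⟨0, by omega⟩) :
    ∃ c, Commute c (gen ⟨0, by omega⟩) ∧ toPerm hn c = σ := by
  let t : ArtinD n := gen ⟨0, by omega⟩
  let L : Subgroup (Perm (Fin n)) := (Subgroup.centralizer {t}).map (toPerm hn)
  suffices h : σ ∈ L by
    obtain ⟨c, hc, rfl⟩ := h
    exact ⟨c, Subgroup.mem_centralizer_singleton_iff.mp hc, rfl⟩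
  have mem_of_fix {τ : Perm (Fin n)} (h0 : τ ⟨0, by omega⟩ = ⟨0, by omega⟩)
      (h1 : τ ⟨1, by omega⟩ = ⟨1, by omega⟩) : τ ∈ L := by
    refine (Subgroup.closure_le L).mpr ?_ (Transposition.mem_closure_adjacent (m := 2) ?_)
    · rintro _ ⟨i, h, hi, rfl⟩
      refine ⟨gen ⟨i, by omega⟩, Subgroup.mem_centralizer_singleton_iff.mpr ?_,
        toPerm_gen_of_lt hn h⟩
      exact gen_mul_comm (by simp only [dnBraid]; omega)
    · rintro ⟨_ | _ | x, hx⟩ hx2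
      · exact h0
      · exact h1
      · simp at hx2
  rw [genTransposition_of_lt hn (by omega)] at hσ
  obtain ⟨h0, h1⟩ | ⟨h0, h1⟩ := (Transposition.smul_ofNe_eq_self_iff _).mp hσ
  · exact mem_of_fix h0 h1
  · have ht : swap ⟨0, by omega⟩ ⟨1, by omega⟩ ∈ L :=
      ⟨t, Subgroup.mem_centralizer_singleton_iff.mpr rfl, toPerm_gen_of_lt hn (by omega)⟩
    refine (Subgroup.mul_mem_cancel_left L ht).mp (mem_of_fix ?_ ?_)
    · rw [Perm.mul_apply, h0, swap_apply_right]
    · rw [Perm.mul_apply, h1, swap_apply_left]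

/-- The squares of the generators and the quotient of the two generators at the fork, which
normally generate the kernel of `toPerm hn`. -/
def pureRelators (hn : 3 ≤ n) : Set (ArtinD n) :=
  insert (gen ⟨n - 2, by omega⟩ * (gen ⟨n - 1, by omega⟩)⁻¹) (Set.range fun i => gen i ^ 2)

theorem pureRelators_subset_ker (hn : 3 ≤ n) :
    pureRelators hn ⊆ ((toPerm hn).ker : Set (ArtinD n)) := by
  have h_min : min (n - 1) (n - 2) = n - 2 := by omega
  rintro _ (rfl | ⟨i, rfl⟩)
  · rw [SetLike.mem_coe, MonoidHom.mem_ker, map_mul, map_inv, toPerm_gen, toPerm_gen,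
      mul_inv_eq_one]
    simp only [genTransposition, min_self, h_min]
  · rw [SetLike.mem_coe, MonoidHom.mem_ker, map_pow, toPerm_gen, sq, Transposition.mul_self]

theorem conj_sq_mem_ker (hn : 3 ≤ n) (i : Fin n) (g : ArtinD n) :
    g * gen i ^ 2 * g⁻¹ ∈ (toPerm hn).ker :=
  (toPerm hn).normal_ker.conj_mem _ (pureRelators_subset_ker hn (Or.inr ⟨i, rfl⟩)) g

/-- The generators `t_1, …, t_{n-1}` along a path in the Coxeter graph, as a sequence indexed by `ℕ`
that is constant from `n - 2` on. -/
def pathGen (hn : 3 ≤ n) (i : ℕ) : ArtinD n := gen ⟨min i (n - 2), by omega⟩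

theorem pathGen_of_lt (hn : 3 ≤ n) {i : ℕ} (h : i + 1 < n) : pathGen hn i = gen ⟨i, by omega⟩ := by
  have hi : min i (n - 2) = i := by omega
  simp only [pathGen, hi]

theorem isCoxeterSequence_pathGen (hn : 3 ≤ n) :
    IsCoxeterSequence
      (fun i => (pathGen hn i : ArtinD n ⧸ Subgroup.normalClosure (pureRelators hn))) (n - 1) where
  mul_self i _ := by
    rw [← QuotientGroup.mk_mul, ← sq, QuotientGroup.eq_one_iff]
    exact Subgroup.subset_normalClosure (Or.inr ⟨_, rfl⟩)
  braid i hi := by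
    simp only [← QuotientGroup.mk_mul]
    rw [pathGen_of_lt hn (by omega), pathGen_of_lt hn (by omega),
      gen_mul_braid (Or.inl ⟨rfl, show i + 1 ≤ n - 2 by omega⟩)]
  comm i j hij hj := by
    simp only [← QuotientGroup.mk_mul]
    rw [pathGen_of_lt hn (by omega), pathGen_of_lt hn (by omega),
      gen_mul_comm (by simp only [dnBraid]; omega)]

theorem closure_image_pathGen (hn : 3 ≤ n) :
    Subgroup.closure
      ((fun i => (pathGen hn i : ArtinD n ⧸ Subgroup.normalClosure (pureRelators hn))) ''
        Set.Iio (n - 1)) = ⊤ := by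
  rw [eq_top_iff, ← MonoidHom.range_eq_top.mpr (QuotientGroup.mk'_surjective _),
    MonoidHom.range_eq_map, ← PresentedGroup.closure_range_of, MonoidHom.map_closure,
    Subgroup.closure_le]
  rintro _ ⟨_, ⟨⟨i, hi⟩, rfl⟩, rfl⟩
  refine Subgroup.subset_closure ⟨min i (n - 2), by simp; omega, ?_⟩
  obtain h | rfl : i + 1 < n ∨ i = n - 1 := by omega
  · have h_min : min i (n - 2) = i := by omega
    simp only [h_min, pathGen_of_lt hn h]
    rfl
  · have h_min : min (n - 1) (n - 2) = n - 2 := by omega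
    simp only [h_min, pathGen, min_self]
    exact mul_inv_eq_one.mp ((QuotientGroup.eq_one_iff _).mpr
      (Subgroup.subset_normalClosure (Or.inl rfl)))

theorem ker_toPerm (hn : 3 ≤ n) :
    (toPerm hn).ker = Subgroup.normalClosure (pureRelators hn) := by
  have h_le := Subgroup.normalClosure_le_normal (pureRelators_subset_ker hn)
  refine le_antisymm (fun x hx => (QuotientGroup.eq_one_iff x).mp ?_) h_le
  have he : Set.InjOn (fun i => (⟨min i (n - 1), by omega⟩ : Fin n)) (Set.Iic (n - 1)) :=
    fun i hi j hj h => by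
      rw [Fin.mk.injEq, min_eq_left hi, min_eq_left hj] at h
      exact h
  refine (isCoxeterSequence_pathGen hn).eq_one_of_map_eq_one he
    (p := QuotientGroup.lift _ (toPerm hn) h_le) (fun i hi => ?_)
    (closure_image_pathGen hn ▸ Subgroup.mem_top _) hx
  have h_left : min i (n - 1) = i := by omega
  have h_right : min (i + 1) (n - 1) = i + 1 := by omega
  simp only [h_left, h_right, pathGen_of_lt hn (show i + 1 < n by omega)]
  exact toPerm_gen_of_lt hn (by omega)

section

variable {μ : ArtinD n → ℚ}

theorem eq_zero_of_sq (hn : 3 ≤ n) (hμ : IsAdditiveOn (toPerm hn).ker μ)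
    (h : ∀ i g, μ (g * gen i ^ 2 * g⁻¹) = 0) : ∀ x ∈ (toPerm hn).ker, μ x = 0 := fun x hx => by
  rw [ker_toPerm] at hx
  refine hμ.eq_zero_of_mem_normalClosure (pureRelators_subset_ker hn) ?_ hx
  rintro _ (rfl | ⟨i, rfl⟩) g
  · let a : ArtinD n := gen ⟨n - 2, by omega⟩
    let b : ArtinD n := gen ⟨n - 1, by omega⟩
    change μ (g * (a * b⁻¹) * g⁻¹) = 0
    have hab : Commute a b := gen_mul_comm (by simp only [dnBraid]; omega)
    have mem_ker (i : Fin n) := conj_sq_mem_ker hn i g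
    have h_mem : g * (a * b⁻¹) * g⁻¹ ∈ (toPerm hn).ker :=
      (toPerm hn).normal_ker.conj_mem _ (pureRelators_subset_ker hn (Or.inl rfl)) g
    have h_sq : (g * (a * b⁻¹) * g⁻¹) ^ 2 = (g * a ^ 2 * g⁻¹) * (g * b ^ 2 * g⁻¹)⁻¹ := by
      rw [conj_pow, hab.inv_right.mul_pow]
      group
    have h_two := hμ.map_pow h_mem 2
    rw [h_sq, hμ (mem_ker _) (inv_mem (mem_ker _)), hμ.map_inv (mem_ker _), h, h] at h_two
    simpa using h_two
  · exact h i g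

theorem map_conj_gen_zero_sq (hn : 3 ≤ n) (hμ : IsAdditiveOn (toPerm hn).ker μ) {g h : ArtinD n}
    (hgh : toPerm hn g • genTransposition hn ⟨0, by omega⟩ =
      toPerm hn h • genTransposition hn ⟨0, by omega⟩) :
    μ (g * gen ⟨0, by omega⟩ ^ 2 * g⁻¹) = μ (h * gen ⟨0, by omega⟩ ^ 2 * h⁻¹) := by
  let t : ArtinD n := gen ⟨0, by omega⟩
  obtain ⟨c, hc, hc'⟩ := exists_commute_gen_zero hn (σ := toPerm hn (h⁻¹ * g)) (by
    rw [map_mul, mul_smul, hgh, map_inv, inv_smul_smul])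
  have hk : g * c⁻¹ * h⁻¹ ∈ (toPerm hn).ker := by
    rw [MonoidHom.mem_ker, map_mul, map_mul, map_inv _ c, hc', ← map_inv, ← map_mul, ← map_mul]
    group
    exact map_one _
  have h_conj : g * t ^ 2 * g⁻¹ = g * c⁻¹ * h⁻¹ * (h * t ^ 2 * h⁻¹) * (g * c⁻¹ * h⁻¹)⁻¹ :=
    calc g * t ^ 2 * g⁻¹ = g * (c⁻¹ * t ^ 2 * c) * g⁻¹ := by
          rw [mul_assoc c⁻¹, ← (hc.pow_right 2).eq, inv_mul_cancel_left]
      _ = _ := by group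
  change μ (g * t ^ 2 * g⁻¹) = _
  rw [h_conj, hμ.map_conj hk (conj_sq_mem_ker hn _ h)]

end

theorem exists_toPerm_smul_eq (hn : 3 ≤ n) (p : Transposition (Fin n)) :
    ∃ g, toPerm hn g • genTransposition hn ⟨0, by omega⟩ = p := by
  obtain ⟨σ, hσ⟩ := MulAction.exists_smul_eq (Perm (Fin n)) (genTransposition hn ⟨0, by omega⟩) p
  obtain ⟨g, rfl⟩ := toPerm_surjective hn σ
  exact ⟨g, hσ⟩

/-- A chosen element conjugating the first generator to one over the transposition `p`. -/
noncomputable def conjugator (hn : 3 ≤ n) (p : Transposition (Fin n)) : ArtinD n :=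
  (exists_toPerm_smul_eq hn p).choose

theorem toPerm_conjugator_smul (hn : 3 ≤ n) (p : Transposition (Fin n)) :
    toPerm hn (conjugator hn p) • genTransposition hn ⟨0, by omega⟩ = p :=
  (exists_toPerm_smul_eq hn p).choose_spec

/-- The Artin group of type `D_n` as a cover of the symmetric group, the twist over `p` being the
square of a conjugate of the first generator over `p`. -/
noncomputable def cover (hn : 3 ≤ n) : TranspositionCover (ArtinD n) (Fin n) where
  toWreath := toWreath hn
  twist p := conjugator hn p * gen ⟨0, by omega⟩ ^ 2 * (conjugator hn p)⁻¹
  perm_surjective := toPerm_surjective hn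
  toWreath_twist p := by
    rw [map_mul, map_mul, map_inv, map_pow, toWreath_gen, Transposition.conj_reflection_sq]
    exact congrArg (·.reflection ^ 2) (toPerm_conjugator_smul hn p)
  map_conj_twist hμ g p := by
    rw [← mul_assoc, ← mul_assoc, mul_assoc _ _ g⁻¹, ← mul_inv_rev]
    refine map_conj_gen_zero_sq hn hμ ?_
    rw [toPerm_conjugator_smul, map_mul, mul_smul, toPerm_conjugator_smul]
  eq_zero_of_twist hμ h := eq_zero_of_sq hn hμ fun i g => by
    obtain ⟨k, hk⟩ := isConj_iff.mp (isConj_gen hn ⟨0, by omega⟩ i)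
    rw [← hk, conj_pow, ← mul_assoc, ← mul_assoc, mul_assoc _ _ g⁻¹, ← mul_inv_rev,
      ← h (toPerm hn (g * k) • genTransposition hn ⟨0, by omega⟩)]
    exact map_conj_gen_zero_sq hn hμ (toPerm_conjugator_smul hn _).symm

instance : Group.FG (ArtinD n) :=
  Group.fg_iff.mpr ⟨_, PresentedGroup.closure_range_of _, Set.finite_range _⟩

end ArtinD

theorem artinD_centralQuotient_propertyRInfinity_general {n : ℕ} (hn : 5 ≤ n)
    (N : Subgroup (ArtinD n)) [N.Normal] (hN : N ≤ Subgroup.center (ArtinD n)) :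
    PropertyRInfinity (ArtinD n ⧸ N) := by
  have hC := (ArtinD.cover (by omega : 3 ≤ n)).center_le_ker_toWreath
    (by rw [Fintype.card_fin]; omega)
  exact ((ArtinD.cover (by omega)).quotient N (hN.trans hC)).propertyRInfinity
    (by rwa [Fintype.card_fin])

/-- For every `n ≥ 6`, the central quotient `A[D_n]/Z(A[D_n])` of the Artin group `A[D_n]`
has property `R_∞`. -/
theorem artinD_centralQuotient_propertyRInfinity (n : ℕ) (hn : 6 ≤ n) :
    PropertyRInfinity (ArtinD n ⧸ Subgroup.center (ArtinD n)) :=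
  artinD_centralQuotient_propertyRInfinity_general (by omega) _ le_rfl
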